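/- arXiv:2511.02974 — 2 statements merged into one kernel-verified Lean document; each statement's English description precedes it below -/
import Mathlib

section
/- There is an absolute constant C > 0 with the following property. Let f : ℝ^n → [0,∞) be a geometric log-concave integrable function (n ≥ 2). Then for every 1 ≤ k ≤ n−1 and every k-dimensional linear subspace H of ℝ^n, (∫_H P_H(Δ_out f)(x) dx)^{1/k} ≤ C·(n/k)²·(log n)^3 · (∫_H P_H(Δ_in f)(x) dx)^{1/k}, where the integrals are with respect to k-dimensional Lebesgue measure on H. -/
open MeasureTheory Metric Set
open scoped ENNReal RealInnerProductSpace Pointwise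

noncomputable section

/-- `f` is a geometric log-concave integrable function: nonnegative, log-concave, centered,
attaining its maximum at the origin, with positive finite integral. -/
structure IsGeomLogConcave {n : ℕ} (f : EuclideanSpace ℝ (Fin n) → ℝ) : Prop where
  nonneg : ∀ x, 0 ≤ f x
  logConcave : ∀ x y : EuclideanSpace ℝ (Fin n), ∀ a b : ℝ, 0 ≤ a → 0 ≤ b → a + b = 1 →
    f x ^ a * f y ^ b ≤ f (a • x + b • y)
  centered : (∫ x, f x • x) = (0 : EuclideanSpace ℝ (Fin n))
  maxAtZero : ∀ x, f x ≤ f 0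
  integrable : Integrable f
  integral_pos : 0 < ∫ x, f x

/-- `Δ_out f (x) = sup { √(f x₁ · f (−x₂)) : x = (x₁ + x₂)/2 }`. -/
def deltaOut {n : ℕ} (f : EuclideanSpace ℝ (Fin n) → ℝ) (x : EuclideanSpace ℝ (Fin n)) : ℝ :=
  sSup {t : ℝ | ∃ x₁ x₂, x = (2⁻¹ : ℝ) • (x₁ + x₂) ∧ t = Real.sqrt (f x₁ * f (-x₂))}

/-- `Δ_in f (x) = min (f x) (f (−x))`. -/
def deltaIn {n : ℕ} (f : EuclideanSpace ℝ (Fin n) → ℝ) (x : EuclideanSpace ℝ (Fin n)) : ℝ :=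
  min (f x) (f (-x))

/-- The projection of a function `g` onto a subspace `H`:
`(P_H g)(z) = sup { g (y + z) : y ∈ H^⊥ }`. -/
def funProj {n : ℕ} (H : Submodule ℝ (EuclideanSpace ℝ (Fin n)))
    (g : EuclideanSpace ℝ (Fin n) → ℝ) (z : EuclideanSpace ℝ (Fin n)) : ℝ :=
  sSup ((fun y => g (y + z)) '' (Hᗮ : Set (EuclideanSpace ℝ (Fin n))))

/-!
Split `ℝⁿ = H × Hᗮ`, scale so that `f 0 = 1`, and let `P` be the projection of `f` to `H`.
Log-concavity of `P` gives the difference-body bound `∫ sup_b √(P (b + z) P b) dz ≤ 4 ^ k ∫ P`, so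
it remains to compare `∫ P` with the integral of the projection of the symmetrization of `f`.

For a centre `c` let `Γ c` be the integral over `H` of the `θ / 2`-th power of the projection of
`x ↦ min (f (c + x)) (f (c - x))`. By Prékopa–Leindler `Γ` is log-concave, so a supergradient at `0`
provides a linear form `l` with `Γ c * exp (l c) ≤ Γ 0`. As `f` is centred, Jensen's inequality
gives `∫ f ≤ ∫ f exp (l / 2)`. Cauchy–Schwarz on the fibres of the projection together with a
Rogers–Shephard type bound on the largest fibre then controls `∫ f * ∫ P` by the square of the
integral over `H` of the square root of the fibre integrals of `f exp l`. Prékopa–Leindler around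
midpoints bounds that square by `2 ^ k ∫ f ^ (1 - θ) exp l Γ ≤ 2 ^ k * Γ 0 * ∫ f ^ (1 - θ)`. The
exponents are removed by `f x ^ s ≤ f (s • x)`, and `θ = k / (2 n)` yields the factor
`(64 (n / k) ^ 2) ^ k`.

Restricting `f` to the interior of its support makes it lower semicontinuous, which settles all
measurability questions, at the price of `f x ≤ f|_int (x / 2)`.
-/

open Module (finrank)

/-! ### The Prékopa–Leindler inequality -/

section ENNReal

theorem iSup_rpow_mul_iSup_rpow_le {ι κ : Sort*} {x : ι → ℝ≥0∞} {y : κ → ℝ≥0∞} {z : ℝ≥0∞}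
    {a b : ℝ} (ha : 0 < a) (hb : 0 < b) (h : ∀ i j, x i ^ a * y j ^ b ≤ z) :
    (⨆ i, x i) ^ a * (⨆ j, y j) ^ b ≤ z := by
  have hx : (⨆ i, x i) ^ a = ⨆ i, x i ^ a := (ENNReal.orderIsoRpow a ha).map_iSup x
  have hy : (⨆ j, y j) ^ b = ⨆ j, y j ^ b := (ENNReal.orderIsoRpow b hb).map_iSup y
  simp_rw [hx, hy, ENNReal.iSup_mul, ENNReal.mul_iSup]
  exact iSup₂_le h

theorem min_le_rpow_mul_rpow {a b : ℝ} (ha : 0 ≤ a) (hb : 0 ≤ b) (hab : a + b = 1)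
    (x y : ℝ≥0∞) : min x y ≤ x ^ a * y ^ b :=
  calc min x y = min x y ^ a * min x y ^ b := by
        rw [← ENNReal.rpow_add_of_nonneg _ _ ha hb, hab, ENNReal.rpow_one]
    _ ≤ x ^ a * y ^ b := by gcongr <;> simp

theorem rpow_mul_rpow_le_ofReal_mul_add {a b : ℝ} (ha : 0 < a) (hb : 0 < b) (hab : a + b = 1)
    (x y : ℝ≥0∞) : x ^ a * y ^ b ≤ ENNReal.ofReal a * x + ENNReal.ofReal b * y := by
  have hconj : (a⁻¹).HolderConjugate b⁻¹ :=
    Real.holderConjugate_iff.2 ⟨(one_lt_inv₀ ha).2 (by linarith), by simpa using hab⟩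
  have young := ENNReal.young_inequality (x ^ a) (y ^ b) hconj
  rwa [ENNReal.rpow_rpow_inv ha.ne', ENNReal.rpow_rpow_inv hb.ne', ENNReal.ofReal_inv_of_pos ha,
    ENNReal.ofReal_inv_of_pos hb, div_eq_mul_inv, div_eq_mul_inv, inv_inv, inv_inv, mul_comm x,
    mul_comm y] at young

end ENNReal

section BrunnMinkowski

variable {A B : Set ℝ}

theorem volume_add_volume_le_of_isCompact (hA : IsCompact A) (hB : IsCompact B)
    (hA₀ : A.Nonempty) (hB₀ : B.Nonempty) : volume A + volume B ≤ volume (A + B) := by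
  have hsup : sSup A ∈ A := hA.sSup_mem hA₀
  have hinf : sInf B ∈ B := hB.sInf_mem hB₀
  have hdisj : AEDisjoint volume (sInf B +ᵥ A) (sSup A +ᵥ B) := by
    refine measure_mono_null (t := {sSup A + sInf B}) ?_ (by simp)
    rintro _ ⟨⟨x, hx, rfl⟩, ⟨y, hy, hxy⟩⟩
    have hx_le : x ≤ sSup A := le_csSup hA.bddAbove hx
    have hle_y : sInf B ≤ y := csInf_le hB.bddBelow hy
    simp only [vadd_eq_add] at hxy ⊢
    rw [mem_singleton_iff]
    linarith
  calc volume A + volume B = volume (sInf B +ᵥ A) + volume (sSup A +ᵥ B) := by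
        rw [measure_vadd, measure_vadd]
    _ = volume ((sInf B +ᵥ A) ∪ (sSup A +ᵥ B)) :=
        (measure_union₀ (hB.vadd _).measurableSet.nullMeasurableSet hdisj).symm
    _ ≤ volume (A + B) := by
        refine measure_mono (union_subset ?_ (vadd_set_subset_add hsup))
        rw [add_comm A]
        exact vadd_set_subset_add hinf

theorem volume_add_volume_le (hA : MeasurableSet A) (hB : MeasurableSet B)
    (hA₀ : A.Nonempty) (hB₀ : B.Nonempty) : volume A + volume B ≤ volume (A + B) := by
  obtain ⟨x₀, hx₀⟩ := hA₀
  obtain ⟨y₀, hy₀⟩ := hB₀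
  rw [hA.measure_eq_iSup_isCompact, hB.measure_eq_iSup_isCompact]
  simp_rw [iSup_and']
  refine ENNReal.biSup_add_biSup_le' (p := fun K => K ⊆ A ∧ IsCompact K)
    (q := fun K => K ⊆ B ∧ IsCompact K) ⟨∅, by simp⟩ ⟨∅, by simp⟩ fun K ⟨hKA, hK⟩ L ⟨hLB, hL⟩ => ?_
  calc volume K + volume L ≤ volume (insert x₀ K) + volume (insert y₀ L) := by
        gcongr <;> exact subset_insert _ _
    _ ≤ volume (insert x₀ K + insert y₀ L) :=
        volume_add_volume_le_of_isCompact (hK.insert x₀) (hL.insert y₀) (insert_nonempty _ _)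
          (insert_nonempty _ _)
    _ ≤ volume (A + B) :=
        measure_mono (add_subset_add (insert_subset hx₀ hKA) (insert_subset hy₀ hLB))

theorem ofReal_mul_volume_add_le {a b : ℝ} (ha : 0 < a) (hb : 0 < b) (hA : MeasurableSet A)
    (hB : MeasurableSet B) (hA₀ : A.Nonempty) (hB₀ : B.Nonempty) :
    ENNReal.ofReal a * volume A + ENNReal.ofReal b * volume B ≤ volume (a • A + b • B) := by
  have hsmul : ∀ {c : ℝ}, 0 < c → ∀ S : Set ℝ, volume (c • S) = ENNReal.ofReal c * volume S :=
    fun hc S => by simp [Measure.addHaar_smul, abs_of_pos hc]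
  rw [← hsmul ha, ← hsmul hb]
  exact volume_add_volume_le (hA.const_smul₀ a) (hB.const_smul₀ b) hA₀.smul_set hB₀.smul_set

end BrunnMinkowski

theorem lintegral_eq_lintegral_measure_ofReal_lt {α : Type*} [MeasurableSpace α] (μ : Measure α)
    {f : α → ℝ≥0∞} (hf : Measurable f) (hfin : ∀ x, f x ≠ ∞) :
    ∫⁻ x, f x ∂μ = ∫⁻ t in Ioi (0 : ℝ), μ {x | ENNReal.ofReal t < f x} := by
  calc ∫⁻ x, f x ∂μ = ∫⁻ x, ENNReal.ofReal (f x).toReal ∂μ := by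
        simp only [ENNReal.ofReal_toReal (hfin _)]
    _ = ∫⁻ t in Ioi (0 : ℝ), μ {x | t < (f x).toReal} :=
        lintegral_eq_lintegral_meas_lt μ (.of_forall fun _ => ENNReal.toReal_nonneg)
          hf.ennreal_toReal.aemeasurable
    _ = ∫⁻ t in Ioi (0 : ℝ), μ {x | ENNReal.ofReal t < f x} :=
        setLIntegral_congr_fun measurableSet_Ioi fun t (ht : 0 < t) => by
          simp only [ENNReal.ofReal_lt_iff_lt_toReal ht.le (hfin _)]

theorem measurable_measure_ofReal_lt {α : Type*} [MeasurableSpace α] (μ : Measure α)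
    (f : α → ℝ≥0∞) : Measurable fun t : ℝ => μ {x | ENNReal.ofReal t < f x} :=
  Antitone.measurable fun _ _ hst =>
    measure_mono fun _ hx => (ENNReal.ofReal_le_ofReal hst).trans_lt hx

section PrekopaLeindlerReal

variable {a b : ℝ} {f g h : ℝ → ℝ≥0∞}

theorem lintegral_add_lintegral_le_of_iSup_eq_one (ha : 0 < a) (hb : 0 < b) (hf : Measurable f)
    (hg : Measurable g) (hh : Measurable h) (hf₁ : ⨆ x, f x = 1) (hg₁ : ⨆ x, g x = 1)
    (hfgh : ∀ x y, min (f x) (g y) ≤ h (a • x + b • y)) :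
    ENNReal.ofReal a * (∫⁻ x, f x) + ENNReal.ofReal b * ∫⁻ x, g x ≤ ∫⁻ x, h x := by
  have hf_le : ∀ x, f x ≤ 1 := fun x => hf₁ ▸ le_iSup f x
  have hg_le : ∀ x, g x ≤ 1 := fun x => hg₁ ▸ le_iSup g x
  refine le_trans ?_ (lintegral_mono fun x => min_le_left (h x) 1)
  have ne_top : ∀ {u : ℝ → ℝ≥0∞}, (∀ x, u x ≤ 1) → ∀ x, u x ≠ ∞ :=
    fun hu x => ne_top_of_le_ne_top ENNReal.one_ne_top (hu x)
  rw [lintegral_eq_lintegral_measure_ofReal_lt _ hf (ne_top hf_le),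
    lintegral_eq_lintegral_measure_ofReal_lt _ hg (ne_top hg_le),
    lintegral_eq_lintegral_measure_ofReal_lt _ (hh.min measurable_const)
      (ne_top fun x => min_le_right _ _),
    ← lintegral_const_mul _ (measurable_measure_ofReal_lt _ f),
    ← lintegral_const_mul _ (measurable_measure_ofReal_lt _ g),
    ← lintegral_add_left ((measurable_measure_ofReal_lt _ f).const_mul _)]
  refine lintegral_mono fun t => ?_
  rcases lt_or_ge (ENNReal.ofReal t) 1 with ht | ht
  · have hf_nonempty : {x | ENNReal.ofReal t < f x}.Nonempty :=
      nonempty_def.2 (lt_iSup_iff.1 (hf₁ ▸ ht))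
    have hg_nonempty : {x | ENNReal.ofReal t < g x}.Nonempty :=
      nonempty_def.2 (lt_iSup_iff.1 (hg₁ ▸ ht))
    refine (ofReal_mul_volume_add_le ha hb (measurableSet_lt measurable_const hf)
      (measurableSet_lt measurable_const hg) hf_nonempty hg_nonempty).trans (measure_mono ?_)
    rintro _ ⟨_, ⟨x, hx, rfl⟩, _, ⟨y, hy, rfl⟩, rfl⟩
    exact lt_min ((lt_min hx hy).trans_le (hfgh x y)) ht
  · have hempty : ∀ {u : ℝ → ℝ≥0∞}, (∀ x, u x ≤ 1) → {x | ENNReal.ofReal t < u x} = ∅ :=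
      fun hu => eq_empty_of_forall_notMem fun x hx => (ht.trans_lt hx).not_ge (hu x)
    simp [hempty hf_le, hempty hg_le]

theorem prekopaLeindler_real_of_iSup_ne_top (ha : 0 < a) (hb : 0 < b) (hab : a + b = 1)
    (hf : Measurable f) (hg : Measurable g) (hh : Measurable h) (hf_top : ⨆ x, f x ≠ ∞)
    (hg_top : ⨆ x, g x ≠ ∞) (hfgh : ∀ x y, f x ^ a * g y ^ b ≤ h (a • x + b • y)) :
    (∫⁻ x, f x) ^ a * (∫⁻ x, g x) ^ b ≤ ∫⁻ x, h x := by
  rcases eq_or_ne (⨆ x, f x) 0 with hf₀ | hf₀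
  · simp [ENNReal.iSup_eq_zero.1 hf₀, ha]
  rcases eq_or_ne (⨆ x, g x) 0 with hg₀ | hg₀
  · simp [ENNReal.iSup_eq_zero.1 hg₀, hb]
  set A := ⨆ x, f x
  set B := ⨆ x, g x
  have hA₀ : A ^ a ≠ 0 := by simp [ENNReal.rpow_eq_zero_iff, hf₀, hf_top]
  have hB₀ : B ^ b ≠ 0 := by simp [ENNReal.rpow_eq_zero_iff, hg₀, hg_top]
  have hA_top : A ^ a ≠ ∞ := ENNReal.rpow_ne_top_of_nonneg ha.le hf_top
  have hB_top : B ^ b ≠ ∞ := ENNReal.rpow_ne_top_of_nonneg hb.le hg_top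
  have hnormalized : ENNReal.ofReal a * (∫⁻ x, f x / A) + ENNReal.ofReal b * ∫⁻ x, g x / B ≤
      ∫⁻ x, h x / (A ^ a * B ^ b) := by
    refine lintegral_add_lintegral_le_of_iSup_eq_one ha hb (hf.div_const A) (hg.div_const B)
      (hh.div_const _) (by rw [← ENNReal.iSup_div, ENNReal.div_self hf₀ hf_top])
      (by rw [← ENNReal.iSup_div, ENNReal.div_self hg₀ hg_top]) fun x y => ?_
    calc min (f x / A) (g y / B) ≤ (f x / A) ^ a * (g y / B) ^ b :=
          min_le_rpow_mul_rpow ha.le hb.le hab _ _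
      _ = f x ^ a * g y ^ b / (A ^ a * B ^ b) := by
          rw [ENNReal.div_rpow_of_nonneg _ _ ha.le, ENNReal.div_rpow_of_nonneg _ _ hb.le,
            ENNReal.mul_div_mul_comm (.inl hA₀) (.inl hA_top)]
      _ ≤ h (a • x + b • y) / (A ^ a * B ^ b) := by gcongr; exact hfgh x y
  have hscale : ∀ {u : ℝ → ℝ≥0∞} {c : ℝ≥0∞}, Measurable u → c ≠ 0 → c ≠ ∞ →
      ∫⁻ x, u x = c * ∫⁻ x, u x / c := fun hu h₀ h_top => by
    simp_rw [← lintegral_const_mul _ (hu.div_const _), ENNReal.mul_div_cancel h₀ h_top]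
  rw [hscale hf hf₀ hf_top, hscale hg hg₀ hg_top,
    hscale hh (mul_ne_zero hA₀ hB₀) (ENNReal.mul_ne_top hA_top hB_top),
    ENNReal.mul_rpow_of_nonneg _ _ ha.le, ENNReal.mul_rpow_of_nonneg _ _ hb.le, mul_mul_mul_comm]
  gcongr
  exact (rpow_mul_rpow_le_ofReal_mul_add ha hb hab _ _).trans hnormalized

theorem lintegral_eq_iSup_lintegral_min_natCast {α : Type*} [MeasurableSpace α] (μ : Measure α)
    {f : α → ℝ≥0∞} (hf : Measurable f) :
    ∫⁻ x, f x ∂μ = ⨆ n : ℕ, ∫⁻ x, min (f x) n ∂μ := by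
  rw [← lintegral_iSup (fun n => hf.min measurable_const) fun m n hmn x => by dsimp only; gcongr]
  simp_rw [← inf_iSup_eq, ENNReal.iSup_natCast, inf_top_eq]

end PrekopaLeindlerReal

/-- The measure `μ` satisfies the Prékopa–Leindler inequality, for all weights `a`, `b`. -/
def IsPrekopaLeindler {V : Type*} [AddCommGroup V] [Module ℝ V] [MeasurableSpace V]
    (μ : Measure V) : Prop :=
  ∀ ⦃a b : ℝ⦄, 0 < a → 0 < b → a + b = 1 → ∀ ⦃f g h : V → ℝ≥0∞⦄, Measurable f → Measurable g →
    Measurable h → (∀ x y, f x ^ a * g y ^ b ≤ h (a • x + b • y)) →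
    (∫⁻ x, f x ∂μ) ^ a * (∫⁻ x, g x ∂μ) ^ b ≤ ∫⁻ x, h x ∂μ

namespace IsPrekopaLeindler

theorem real : IsPrekopaLeindler (volume : Measure ℝ) := by
  intro a b ha hb hab f g h hf hg hh hfgh
  rw [lintegral_eq_iSup_lintegral_min_natCast _ hf, lintegral_eq_iSup_lintegral_min_natCast _ hg]
  have htrunc : ∀ (u : ℝ → ℝ≥0∞) (n : ℕ), ⨆ x, min (u x) n ≠ ∞ := fun u n =>
    ne_top_of_le_ne_top (ENNReal.natCast_ne_top n) (iSup_le fun x => min_le_right _ _)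
  refine iSup_rpow_mul_iSup_rpow_le ha hb fun i j => ?_
  refine prekopaLeindler_real_of_iSup_ne_top ha hb hab (hf.min measurable_const)
    (hg.min measurable_const) hh (htrunc f i) (htrunc g j) fun x y => le_trans ?_ (hfgh x y)
  gcongr <;> exact min_le_left _ _

section

variable {V W : Type*} [AddCommGroup V] [Module ℝ V] [MeasurableSpace V] [AddCommGroup W]
  [Module ℝ W] [MeasurableSpace W] {μ : Measure V} {ν : Measure W}

theorem prod [SFinite ν] (hμ : IsPrekopaLeindler μ) (hν : IsPrekopaLeindler ν) :
    IsPrekopaLeindler (μ.prod ν) := by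
  intro a b ha hb hab f g h hf hg hh hfgh
  rw [lintegral_prod _ hf.aemeasurable, lintegral_prod _ hg.aemeasurable,
    lintegral_prod _ hh.aemeasurable]
  refine hμ ha hb hab hf.lintegral_prod_right' hg.lintegral_prod_right'
    hh.lintegral_prod_right' fun x y => ?_
  exact hν ha hb hab (hf.comp measurable_prodMk_left) (hg.comp measurable_prodMk_left)
    (hh.comp measurable_prodMk_left) fun u v => hfgh (x, u) (y, v)

theorem map (hμ : IsPrekopaLeindler μ) (L : V →ₗ[ℝ] W) (hL : Measurable L) :
    IsPrekopaLeindler (μ.map L) := by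
  intro a b ha hb hab f g h hf hg hh hfgh
  rw [lintegral_map hf hL, lintegral_map hg hL, lintegral_map hh hL]
  exact hμ ha hb hab (hf.comp hL) (hg.comp hL) (hh.comp hL) fun x y => by
    simpa using hfgh (L x) (L y)

theorem smul (hμ : IsPrekopaLeindler μ) (c : ℝ≥0∞) : IsPrekopaLeindler (c • μ) := by
  intro a b ha hb hab f g h hf hg hh hfgh
  simp only [lintegral_smul_measure, smul_eq_mul]
  rw [ENNReal.mul_rpow_of_nonneg _ _ ha.le, ENNReal.mul_rpow_of_nonneg _ _ hb.le,
    mul_mul_mul_comm, ← ENNReal.rpow_add_of_nonneg _ _ ha.le hb.le, hab, ENNReal.rpow_one]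
  gcongr
  exact hμ ha hb hab hf hg hh hfgh

end

theorem of_subsingleton {V : Type*} [AddCommGroup V] [Module ℝ V] [MeasurableSpace V]
    [Subsingleton V] {μ : Measure V} (hμ : μ univ = 1) : IsPrekopaLeindler μ := by
  intro a b _ _ _ f g h _ _ _ hfgh
  have hconst : ∀ u : V → ℝ≥0∞, ∫⁻ x, u x ∂μ = u 0 := fun u => by
    simp [Subsingleton.elim _ (0 : V), hμ]
  rw [hconst, hconst, hconst]
  exact (hfgh 0 0).trans_eq (by simp)

theorem pi_real (d : ℕ) : IsPrekopaLeindler (volume : Measure (Fin d → ℝ)) := by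
  induction d with
  | zero => exact of_subsingleton (by simp [volume_pi])
  | succ d ih =>
    let e := Fin.consEquivL ℝ fun _ : Fin (d + 1) => ℝ
    have he : ⇑(MeasurableEquiv.piFinSuccAbove (fun _ : Fin (d + 1) => ℝ) 0).symm = e := by
      funext x
      exact Fin.insertNth_zero' x.1 x.2
    rw [← (volume_preserving_piFinSuccAbove (fun _ : Fin (d + 1) => ℝ) 0).symm.map_eq, he]
    exact (real.prod ih).map e.toLinearMap e.continuous.measurable

theorem addHaar {V : Type*} [NormedAddCommGroup V] [NormedSpace ℝ V] [FiniteDimensional ℝ V]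
    [MeasurableSpace V] [BorelSpace V] (μ : Measure V) [μ.IsAddHaarMeasure] :
    IsPrekopaLeindler μ := by
  let e := (Module.finBasis ℝ V).equivFunL.symm
  have hmap : IsPrekopaLeindler ((volume : Measure (Fin (finrank ℝ V) → ℝ)).map e) :=
    (pi_real _).map e.toLinearMap e.continuous.measurable
  have : ((volume : Measure (Fin (finrank ℝ V) → ℝ)).map e).IsAddHaarMeasure :=
    e.isAddHaarMeasure_map _
  rw [Measure.isAddLeftInvariant_eq_smul μ (volume.map e)]
  exact hmap.smul (_ : NNReal)

end IsPrekopaLeindler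

/-! ### Log-concave functions -/

/-- Log-concavity of a function with values in `[0, ∞]`. -/
def IsLogConcave {V : Type*} [AddCommGroup V] [Module ℝ V] (f : V → ℝ≥0∞) : Prop :=
  ∀ ⦃a b : ℝ⦄, 0 < a → 0 < b → a + b = 1 → ∀ x y, f x ^ a * f y ^ b ≤ f (a • x + b • y)

/-- The exponential weight `e ^ l` of a linear functional `l`. -/
def expWeight {V : Type*} [TopologicalSpace V] [AddCommGroup V] [Module ℝ V] (l : V →L[ℝ] ℝ)
    (x : V) : ℝ≥0∞ :=
  ENNReal.ofReal (Real.exp (l x))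

section expWeight

variable {V : Type*} [TopologicalSpace V] [AddCommGroup V] [Module ℝ V] (l : V →L[ℝ] ℝ)

theorem measurable_expWeight [MeasurableSpace V] [OpensMeasurableSpace V] :
    Measurable (expWeight l) :=
  (Real.measurable_exp.comp l.continuous.measurable).ennreal_ofReal

theorem expWeight_smul (s : ℝ) (x : V) : expWeight (s • l) x = expWeight l x ^ s := by
  rw [expWeight, expWeight, ENNReal.ofReal_rpow_of_pos (Real.exp_pos _), ← Real.exp_mul,
    smul_apply, smul_eq_mul, mul_comm]

theorem expWeight_rpow_mul_rpow (a b : ℝ) (x y : V) :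
    expWeight l x ^ a * expWeight l y ^ b = expWeight l (a • x + b • y) := by
  simp_rw [expWeight, ENNReal.ofReal_rpow_of_pos (Real.exp_pos _),
    ← ENNReal.ofReal_mul (Real.rpow_nonneg (Real.exp_nonneg _) _), ← Real.exp_mul, ← Real.exp_add,
    map_add, map_smul, smul_eq_mul, mul_comm]

end expWeight

namespace IsLogConcave

section Algebra

variable {V W : Type*} [AddCommGroup V] [Module ℝ V] [AddCommGroup W] [Module ℝ W]
  {f g : V → ℝ≥0∞}

theorem comp_linearMap (hf : IsLogConcave f) (L : W →ₗ[ℝ] V) : IsLogConcave fun x => f (L x) :=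
  fun a b ha hb hab x y => by simpa using hf ha hb hab (L x) (L y)

theorem min (hf : IsLogConcave f) (hg : IsLogConcave g) :
    IsLogConcave fun x => min (f x) (g x) := by
  intro a b ha hb hab x y
  refine le_min (le_trans ?_ (hf ha hb hab x y)) (le_trans ?_ (hg ha hb hab x y)) <;>
    gcongr <;> simp

theorem rpow (hf : IsLogConcave f) {s : ℝ} (hs : 0 ≤ s) : IsLogConcave fun x => f x ^ s := by
  intro a b ha hb hab x y
  calc (f x ^ s) ^ a * (f y ^ s) ^ b = (f x ^ a * f y ^ b) ^ s := by
        rw [ENNReal.mul_rpow_of_nonneg _ _ hs]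
        simp_rw [← ENNReal.rpow_mul, mul_comm]
    _ ≤ f (a • x + b • y) ^ s := by gcongr; exact hf ha hb hab x y

theorem iSup_snd {f : V × W → ℝ≥0∞} (hf : IsLogConcave f) :
    IsLogConcave fun z => ⨆ w, f (z, w) := fun _ _ ha hb hab _ _ =>
  iSup_rpow_mul_iSup_rpow_le ha hb fun u v =>
    (hf ha hb hab (_, u) (_, v)).trans (le_iSup (fun w => f (_, w)) _)

theorem convex_setOf_lt (hf : IsLogConcave f) (δ : ℝ≥0∞) : Convex ℝ {x | δ < f x} :=
  convex_iff_forall_pos.2 fun _ hx _ hy _ _ ha hb hab =>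
    (lt_min hx hy).trans_le
      ((min_le_rpow_mul_rpow ha.le hb.le hab _ _).trans (hf ha hb hab _ _))

theorem convex_support (hf : IsLogConcave f) : Convex ℝ (Function.support f) := by
  simpa only [Function.support, pos_iff_ne_zero] using hf.convex_setOf_lt 0

theorem rpow_le_smul (hf : IsLogConcave f) (hf₀ : f 0 = 1) {t : ℝ} (ht₀ : 0 < t) (ht₁ : t < 1)
    (x : V) : f x ^ t ≤ f (t • x) := by
  simpa [hf₀] using hf ht₀ (sub_pos.2 ht₁) (add_sub_cancel t 1) x 0

theorem mul_le_of_le_one (hf : IsLogConcave f) (hf₁ : ∀ x, f x ≤ 1) {a b : ℝ} (ha : 0 < a)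
    (hb : 0 < b) (hab : a + b = 1) (x y : V) : f x * f y ≤ f (a • x + b • y) := by
  have le_rpow : ∀ {s : ℝ} (z : V), s ≤ 1 → f z ≤ f z ^ s := fun z hs => by
    simpa using ENNReal.rpow_le_rpow_of_exponent_ge (hf₁ z) hs
  exact (mul_le_mul' (le_rpow x (by linarith)) (le_rpow y (by linarith))).trans
    (hf ha hb hab x y)

theorem concaveOn_log_toReal (hf : IsLogConcave f) (hf_top : ∀ x, f x ≠ ∞) :
    ConcaveOn ℝ (Function.support f) fun x => Real.log (f x).toReal := by
  refine concaveOn_iff_forall_pos.2 ⟨hf.convex_support, fun x hx y hy a b ha hb hab => ?_⟩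
  have hx_pos := ENNReal.toReal_pos hx (hf_top x)
  have hy_pos := ENNReal.toReal_pos hy (hf_top y)
  have hle := ENNReal.toReal_mono (hf_top _) (hf ha hb hab x y)
  rw [ENNReal.toReal_mul, ← ENNReal.toReal_rpow, ← ENNReal.toReal_rpow] at hle
  have hlog := Real.log_le_log (by positivity) hle
  rwa [Real.log_mul (by positivity) (by positivity), Real.log_rpow hx_pos, Real.log_rpow hy_pos]
    at hlog

end Algebra

/-- **Prékopa's theorem.** -/
theorem lintegral_snd {V W : Type*} [AddCommGroup V] [Module ℝ V] [MeasurableSpace V]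
    [NormedAddCommGroup W] [NormedSpace ℝ W] [FiniteDimensional ℝ W] [MeasurableSpace W]
    [BorelSpace W] (ν : Measure W) [ν.IsAddHaarMeasure] {f : V × W → ℝ≥0∞}
    (hf : IsLogConcave f) (hf_meas : Measurable f) :
    IsLogConcave fun x => ∫⁻ w, f (x, w) ∂ν := fun _ _ ha hb hab x y =>
  IsPrekopaLeindler.addHaar ν ha hb hab (hf_meas.comp measurable_prodMk_left)
    (hf_meas.comp measurable_prodMk_left) (hf_meas.comp measurable_prodMk_left)
    fun u v => hf ha hb hab (x, u) (y, v)

end IsLogConcave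

section Supergradient

variable {V : Type*} [NormedAddCommGroup V] [NormedSpace ℝ V]

theorem exists_supergradient_of_isOpen {s : Set V} {g : V → ℝ} (hs : IsOpen s)
    (hg : ConcaveOn ℝ s g) (hg_cont : ContinuousOn g s) {x₀ : V} (hx₀ : x₀ ∈ s) :
    ∃ l : V →L[ℝ] ℝ, ∀ x ∈ s, g x ≤ g x₀ + l (x - x₀) := by
  have hopen : IsOpen {p : V × ℝ | p.1 ∈ s ∧ p.2 < g p.1} := by
    have hcont : ContinuousOn (fun p : V × ℝ => g p.1 - p.2) (Prod.fst ⁻¹' s) :=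
      (hg_cont.comp continuousOn_fst fun _ hp => hp).sub continuousOn_snd
    convert hcont.isOpen_inter_preimage (hs.preimage continuous_fst) (isOpen_Ioi (a := (0 : ℝ)))
      using 1
    ext p
    simp
  obtain ⟨L, hL⟩ := geometric_hahn_banach_open_point hg.convex_strict_hypograph hopen
    (x := (x₀, g x₀)) (by simp)
  have hL_apply : ∀ x t, L (x, t) = L (x, 0) + t * L (0, 1) := fun x t => by
    rw [show (x, t) = (x, (0 : ℝ)) + t • ((0 : V), (1 : ℝ)) by simp, map_add, map_smul, smul_eq_mul]
  set β := L (0, 1)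
  have hβ : 0 < β := by
    have h := hL (x₀, g x₀ - 1) ⟨hx₀, by simp⟩
    rw [hL_apply, hL_apply x₀ (g x₀)] at h
    linarith
  have hL_le : ∀ x ∈ s, L (x, 0) + g x * β ≤ L (x₀, 0) + g x₀ * β := fun x hx =>
    le_of_forall_pos_lt_add fun ε hε => by
      have h := hL (x, g x - ε / β) ⟨hx, by simpa using div_pos hε hβ⟩
      rw [hL_apply, hL_apply x₀ (g x₀), sub_mul, div_mul_cancel₀ _ hβ.ne'] at h
      linarith
  refine ⟨-β⁻¹ • L.comp (.inl ℝ V ℝ), fun x hx => ?_⟩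
  have hsub : L (x - x₀, 0) = L (x, 0) - L (x₀, 0) := by rw [← map_sub, Prod.mk_sub_mk, sub_zero]
  simp only [smul_apply, ContinuousLinearMap.comp_apply,
    ContinuousLinearMap.inl_apply, smul_eq_mul, hsub]
  have := hL_le x hx
  field_simp
  linarith

theorem exists_supergradient_of_mem_interior [FiniteDimensional ℝ V] {s : Set V} {g : V → ℝ}
    (hg : ConcaveOn ℝ s g) {x₀ : V} (hx₀ : x₀ ∈ interior s) :
    ∃ l : V →L[ℝ] ℝ, ∀ x ∈ s, g x ≤ g x₀ + l (x - x₀) := by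
  have hg_int := hg.subset interior_subset hg.1.interior
  obtain ⟨l, hl⟩ := exists_supergradient_of_isOpen isOpen_interior hg_int
    (hg_int.continuousOn isOpen_interior) hx₀
  refine ⟨l, fun x hx => ?_⟩
  have hlocal : IsLocalMaxOn (fun x => g x - l x) s x₀ := by
    filter_upwards [mem_nhdsWithin_of_mem_nhds (isOpen_interior.mem_nhds hx₀)] with y hy
    have := hl y hy
    rw [map_sub] at this
    linarith
  have hmax := IsMaxOn.of_isLocalMaxOn_of_concaveOn (interior_subset hx₀) hlocal
    (hg.sub (l.toLinearMap.convexOn hg.1)) hx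
  simp only [mem_ofPred_eq] at hmax
  rw [map_sub]
  linarith

end Supergradient

theorem ofReal_exp_log_toReal {x : ℝ≥0∞} (hx₀ : x ≠ 0) (hx : x ≠ ∞) :
    ENNReal.ofReal (Real.exp (Real.log x.toReal)) = x := by
  rw [Real.exp_log (ENNReal.toReal_pos hx₀ hx), ENNReal.ofReal_toReal hx]

namespace IsLogConcave

variable {V : Type*} [NormedAddCommGroup V] [NormedSpace ℝ V] {f : V → ℝ≥0∞}

-- An infinite value at `x` propagates to `0`, which lies between `x` and a support point `-e • x`.
theorem ne_top (hf : IsLogConcave f) (hsupp : 0 ∈ interior (Function.support f))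
    (hf₀ : f 0 ≠ ∞) (x : V) : f x ≠ ∞ := by
  intro hx
  have hlim : Filter.Tendsto (fun e : ℝ => -(e • x)) (nhdsWithin 0 (Ioi 0)) (nhds 0) := by
    have : ContinuousAt (fun e : ℝ => -(e • x)) 0 := by fun_prop
    simpa using this.tendsto.mono_left nhdsWithin_le_nhds
  obtain ⟨e, he_supp, he : 0 < e⟩ :=
    ((hlim.eventually_mem (mem_interior_iff_mem_nhds.1 hsupp)).and self_mem_nhdsWithin).exists
  have hle := hf (a := e / (1 + e)) (b := 1 / (1 + e)) (by positivity) (by positivity)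
    (by field_simp; ring) x (-(e • x))
  have hzero : (e / (1 + e)) • x + (1 / (1 + e)) • -(e • x) = 0 := by
    module
  rw [hzero, hx, ENNReal.top_rpow_of_pos (by positivity), ENNReal.top_mul, top_le_iff] at hle
  · exact hf₀ hle
  · exact (ENNReal.rpow_pos_of_nonneg (pos_iff_ne_zero.2 he_supp) (by positivity)).ne'

variable [FiniteDimensional ℝ V]

theorem continuousOn_interior_support (hf : IsLogConcave f) (hf_top : ∀ x, f x ≠ ∞) :
    ContinuousOn f (interior (Function.support f)) := by
  have hlog : ContinuousOn (fun x => Real.log (f x).toReal) (interior (Function.support f)) :=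
    ((hf.concaveOn_log_toReal hf_top).subset interior_subset
      hf.convex_support.interior).continuousOn isOpen_interior
  refine (ENNReal.continuous_ofReal.comp_continuousOn
    (Real.continuous_exp.comp_continuousOn hlog)).congr fun x hx => ?_
  exact (ofReal_exp_log_toReal (interior_subset hx) (hf_top x)).symm

theorem exists_mul_expWeight_le (hf : IsLogConcave f)
    (hsupp : 0 ∈ interior (Function.support f)) (hf₀ : f 0 ≠ ∞) :
    ∃ l : V →L[ℝ] ℝ, ∀ x, f x * expWeight l x ≤ f 0 := by
  have hf_top := hf.ne_top hsupp hf₀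
  obtain ⟨l, hl⟩ :=
    exists_supergradient_of_mem_interior (hf.concaveOn_log_toReal hf_top) hsupp
  refine ⟨-l, fun x => ?_⟩
  rcases eq_or_ne (f x) 0 with hx | hx
  · simp [hx]
  rw [← ofReal_exp_log_toReal hx (hf_top x), ← ofReal_exp_log_toReal (interior_subset hsupp) hf₀,
    expWeight, ← ENNReal.ofReal_mul (Real.exp_nonneg _), ← Real.exp_add]
  gcongr
  have := hl x hx
  rw [sub_zero] at this
  rw [neg_apply]
  linarith

end IsLogConcave

section Scaling

variable {V : Type*} [NormedAddCommGroup V] [NormedSpace ℝ V] [FiniteDimensional ℝ V]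
  [MeasurableSpace V] [BorelSpace V] (μ : Measure V) [μ.IsAddHaarMeasure]

theorem ofReal_pow_mul_lintegral_comp_smul (f : V → ℝ≥0∞) {r : ℝ} (hr : 0 < r) :
    ENNReal.ofReal (r ^ finrank ℝ V) * ∫⁻ x, f (r • x) ∂μ = ∫⁻ x, f x ∂μ := by
  have hmap : ∫⁻ x, f x ∂μ.map (r • ·) = ∫⁻ x, f (r • x) ∂μ :=
    lintegral_map_equiv f (MeasurableEquiv.smul₀ r hr.ne')
  rw [← hmap, Measure.map_addHaar_smul μ hr.ne', lintegral_smul_measure, smul_eq_mul, ← mul_assoc,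
    ← ENNReal.ofReal_mul (by positivity), abs_of_pos (by positivity),
    mul_inv_cancel₀ (by positivity), ENNReal.ofReal_one, one_mul]

theorem ofReal_pow_mul_lintegral_comp_add_smul (f : V → ℝ≥0∞) {r : ℝ} (hr : 0 < r) (x₀ : V) :
    ENNReal.ofReal (r ^ finrank ℝ V) * ∫⁻ x, f (x₀ + r • x) ∂μ = ∫⁻ x, f x ∂μ := by
  rw [ofReal_pow_mul_lintegral_comp_smul μ (fun x => f (x₀ + x)) hr, lintegral_add_left_eq_self]

end Scaling

/-! ### Projections of centered log-concave functions on a product -/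

theorem lintegral_ne_zero_of_lowerSemicontinuous {X : Type*} [TopologicalSpace X]
    [MeasurableSpace X] [BorelSpace X] (μ : Measure X) [μ.IsOpenPosMeasure] {g : X → ℝ≥0∞}
    (hg : LowerSemicontinuous g) {x : X} (hx : g x ≠ 0) : ∫⁻ x, g x ∂μ ≠ 0 := by
  have hsupp : Function.support g = g ⁻¹' Ioi 0 := by ext; simp [pos_iff_ne_zero]
  rw [← pos_iff_ne_zero, lintegral_pos_iff_support hg.measurable, hsupp]
  exact (hg.isOpen_preimage 0).measure_pos μ ⟨x, pos_iff_ne_zero.2 hx⟩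

theorem lowerSemicontinuous_rpow {X : Type*} [TopologicalSpace X] {g : X → ℝ≥0∞}
    (hg : LowerSemicontinuous g) {s : ℝ} (hs : 0 ≤ s) : LowerSemicontinuous fun x => g x ^ s :=
  ENNReal.continuous_rpow_const.comp_lowerSemicontinuous hg
    fun _ _ hxy => ENNReal.rpow_le_rpow hxy hs

/-- The projection of a function on a product to the first factor. -/
def projFst {A B : Type*} (f : A × B → ℝ≥0∞) (z : A) : ℝ≥0∞ :=
  ⨆ w, f (z, w)

/-- `symmProj f (c, t)` is the value at `t` of the projection to `A` of `d ↦ min (f (c + d))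
(f (c - d))`, the symmetrization of `f` about the centre `c`. The centre is a variable so that
log-concavity can be expressed jointly in `c` and `t`. -/
def symmProj {A B : Type*} [AddCommGroup A] [AddCommGroup B] (f : A × B → ℝ≥0∞)
    (p : (A × B) × A) : ℝ≥0∞ :=
  ⨆ w, min (f (p.1 + (p.2, w))) (f (p.1 - (p.2, w)))

/-- A lower semicontinuous integrable log-concave function with maximum `f 0 = 1` that is centered.
The centering is encoded by its consequence that exponential weights do not decrease the
integral. -/
structure IsCenteredLogConcave {V : Type*} [AddCommGroup V] [Module ℝ V] [TopologicalSpace V]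
    [MeasurableSpace V] (μ : Measure V) (f : V → ℝ≥0∞) : Prop where
  isLogConcave : IsLogConcave f
  lowerSemicontinuous : LowerSemicontinuous f
  le_one : ∀ x, f x ≤ 1
  map_zero : f 0 = 1
  lintegral_ne_top : ∫⁻ x, f x ∂μ ≠ ∞
  lintegral_le_expWeight : ∀ l : V →L[ℝ] ℝ, ∫⁻ x, f x ∂μ ≤ ∫⁻ x, f x * expWeight l x ∂μ

theorem IsCenteredLogConcave.lintegral_ne_zero {V : Type*} [AddCommGroup V] [Module ℝ V]
    [TopologicalSpace V] [MeasurableSpace V] [BorelSpace V] {μ : Measure V} [μ.IsOpenPosMeasure]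
    {f : V → ℝ≥0∞} (hf : IsCenteredLogConcave μ f) : ∫⁻ x, f x ∂μ ≠ 0 :=
  lintegral_ne_zero_of_lowerSemicontinuous μ hf.lowerSemicontinuous
    (hf.map_zero.trans_ne one_ne_zero)

theorem lowerSemicontinuous_projFst {A B : Type*} [TopologicalSpace A] [TopologicalSpace B]
    {f : A × B → ℝ≥0∞} (hf : LowerSemicontinuous f) : LowerSemicontinuous (projFst f) :=
  lowerSemicontinuous_iSup fun w => hf.comp (Continuous.prodMk_left w)

section symmProj

variable {A B : Type*} [NormedAddCommGroup A] [NormedAddCommGroup B] {f : A × B → ℝ≥0∞}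

theorem min_le_symmProj (f : A × B → ℝ≥0∞) (c d : A × B) :
    min (f (c + d)) (f (c - d)) ≤ symmProj f (c, d.1) :=
  le_iSup (fun w => min (f (c + (d.1, w))) (f (c - (d.1, w)))) d.2

theorem lowerSemicontinuous_symmProj (hf : LowerSemicontinuous f) :
    LowerSemicontinuous (symmProj f) :=
  lowerSemicontinuous_iSup fun w =>
    (hf.comp (g := fun p : (A × B) × A => p.1 + (p.2, w)) (by fun_prop)).inf
      (hf.comp (g := fun p : (A × B) × A => p.1 - (p.2, w)) (by fun_prop))

variable [NormedSpace ℝ A] [NormedSpace ℝ B]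

theorem IsLogConcave.symmProj (hf : IsLogConcave f) : IsLogConcave (symmProj f) := by
  let center : ((A × B) × A) × B →ₗ[ℝ] A × B := .fst ℝ _ _ ∘ₗ .fst ℝ _ _
  let shift : ((A × B) × A) × B →ₗ[ℝ] A × B :=
    (LinearMap.snd ℝ (A × B) A).prodMap LinearMap.id
  exact ((hf.comp_linearMap (center + shift)).min (hf.comp_linearMap (center - shift))).iSup_snd

theorem rpow_half_mul_rpow_half_le (hf : IsLogConcave f) (hf₁ : ∀ x, f x ≤ 1) {θ : ℝ}
    (hθ₀ : 0 ≤ θ) (hθ₁ : θ ≤ 1) (c d : A × B) :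
    f (c - d) ^ (2⁻¹ : ℝ) * f (c + d) ^ (2⁻¹ : ℝ) ≤
      f c ^ (1 - θ) * symmProj f (c, d.1) ^ (θ / 2) := by
  set g := f (c - d) ^ (2⁻¹ : ℝ) * f (c + d) ^ (2⁻¹ : ℝ)
  have hg_le : g ≤ f c := by
    convert hf (a := 2⁻¹) (b := 2⁻¹) (by norm_num) (by norm_num) (by norm_num) (c - d) (c + d)
    module
  have hg_le_min : g ≤ min (f (c + d)) (f (c - d)) ^ (2⁻¹ : ℝ) := by
    have hle_one : ∀ x, f x ^ (2⁻¹ : ℝ) ≤ 1 := fun x => ENNReal.rpow_le_one (hf₁ x) (by norm_num)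
    rcases min_choice (f (c + d)) (f (c - d)) with h | h <;> rw [h]
    · exact mul_le_of_le_one_left' (hle_one _)
    · exact mul_le_of_le_one_right' (hle_one _)
  calc g = g ^ (1 - θ) * g ^ θ := by
        rw [← ENNReal.rpow_add_of_nonneg _ _ (sub_nonneg.2 hθ₁) hθ₀, sub_add_cancel,
          ENNReal.rpow_one]
    _ ≤ f c ^ (1 - θ) * (min (f (c + d)) (f (c - d)) ^ (2⁻¹ : ℝ)) ^ θ := by
        have := sub_nonneg.2 hθ₁
        gcongr
    _ = f c ^ (1 - θ) * min (f (c + d)) (f (c - d)) ^ (θ / 2) := by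
        rw [← ENNReal.rpow_mul, inv_mul_eq_div]
    _ ≤ f c ^ (1 - θ) * symmProj f (c, d.1) ^ (θ / 2) := by
        gcongr
        exact min_le_symmProj f c d

end symmProj

section CauchySchwarz

variable {X Y : Type*} [MeasurableSpace X] [MeasurableSpace Y]

theorem lintegral_mul_rpow_half_le (ν : Measure Y) {g φ : Y → ℝ≥0∞} (hg : Measurable g)
    (hφ : Measurable φ) :
    ∫⁻ y, g y * φ y ^ (2⁻¹ : ℝ) ∂ν ≤
      (∫⁻ y, g y ∂ν) ^ (2⁻¹ : ℝ) * (∫⁻ y, g y * φ y ∂ν) ^ (2⁻¹ : ℝ) := by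
  have hsplit : ∀ y, g y * φ y ^ (2⁻¹ : ℝ) = g y ^ (2⁻¹ : ℝ) * (g y * φ y) ^ (2⁻¹ : ℝ) := by
    intro y
    rw [ENNReal.mul_rpow_of_nonneg _ _ (by norm_num), ← mul_assoc,
      ← ENNReal.rpow_add_of_nonneg _ _ (by norm_num) (by norm_num)]
    norm_num
  have hholder := ENNReal.lintegral_mul_le_Lp_mul_Lq ν Real.HolderConjugate.two_two
    (hg.pow_const (2⁻¹ : ℝ)).aemeasurable ((hg.mul hφ).pow_const (2⁻¹ : ℝ)).aemeasurable
  simp only [Pi.mul_apply, ← ENNReal.rpow_mul, ← hsplit] at hholder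
  norm_num at hholder ⊢
  exact hholder

theorem sq_lintegral_mul_rpow_half_le (μ : Measure X) (ν : Measure Y) [SFinite ν]
    {f φ : X × Y → ℝ≥0∞} (hf : Measurable f) (hφ : Measurable φ) :
    (∫⁻ p, f p * φ p ^ (2⁻¹ : ℝ) ∂μ.prod ν) ^ 2 ≤
      (⨆ x, ∫⁻ y, f (x, y) ∂ν) *
        (∫⁻ x, (∫⁻ y, f (x, y) * φ (x, y) ∂ν) ^ (2⁻¹ : ℝ) ∂μ) ^ 2 := by
  have hslice : Measurable fun x => ∫⁻ y, f (x, y) * φ (x, y) ∂ν :=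
    (hf.mul hφ).lintegral_prod_right'
  set M := ⨆ x, ∫⁻ y, f (x, y) ∂ν
  calc (∫⁻ p, f p * φ p ^ (2⁻¹ : ℝ) ∂μ.prod ν) ^ 2
      ≤ (∫⁻ x, M ^ (2⁻¹ : ℝ) * (∫⁻ y, f (x, y) * φ (x, y) ∂ν) ^ (2⁻¹ : ℝ) ∂μ) ^ 2 := by
        rw [lintegral_prod _ (by fun_prop)]
        gcongr with x
        refine (lintegral_mul_rpow_half_le ν (by fun_prop) (by fun_prop)).trans ?_
        gcongr
        exact le_iSup (fun x => ∫⁻ y, f (x, y) ∂ν) x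
    _ = M * (∫⁻ x, (∫⁻ y, f (x, y) * φ (x, y) ∂ν) ^ (2⁻¹ : ℝ) ∂μ) ^ 2 := by
        rw [lintegral_const_mul _ (hslice.pow_const _), mul_pow, ← ENNReal.rpow_mul_natCast]
        norm_num

end CauchySchwarz

theorem lintegral_lintegral_eq_two_pow_mul {A : Type*} [NormedAddCommGroup A] [NormedSpace ℝ A]
    [FiniteDimensional ℝ A] [MeasurableSpace A] [BorelSpace A] (μ : Measure A)
    [μ.IsAddHaarMeasure] {R : A × A → ℝ≥0∞} (hR : Measurable R) :
    ∫⁻ x, ∫⁻ y, R (x, y) ∂μ ∂μ =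
      ENNReal.ofReal (2 ^ finrank ℝ A) * ∫⁻ c, ∫⁻ t, R (c - t, c + t) ∂μ ∂μ := by
  have hinner : ∀ x, ∫⁻ y, R (x, y) ∂μ =
      ENNReal.ofReal (2 ^ finrank ℝ A) * ∫⁻ t, R (x, x + (2 : ℝ) • t) ∂μ := fun x =>
    (ofReal_pow_mul_lintegral_comp_add_smul μ (fun y => R (x, y)) two_pos x).symm
  have hshift : ∀ t, ∫⁻ x, R (x, x + (2 : ℝ) • t) ∂μ = ∫⁻ c, R (c - t, c + t) ∂μ := fun t => by
    rw [← lintegral_sub_right_eq_self _ t]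
    congr with c
    congr 2
    module
  simp_rw [hinner]
  rw [lintegral_const_mul _ (Measurable.lintegral_prod_right'
      (f := fun p : A × A => R (p.1, p.1 + (2 : ℝ) • p.2)) (by fun_prop)),
    lintegral_lintegral_swap (f := fun x t => R (x, x + (2 : ℝ) • t)) (by fun_prop)]
  simp_rw [hshift]
  rw [lintegral_lintegral_swap (f := fun t c => R (c - t, c + t)) (by fun_prop)]

section RpowIntegral

variable {V : Type*} [NormedAddCommGroup V] [NormedSpace ℝ V] [FiniteDimensional ℝ V]
  [MeasurableSpace V] [BorelSpace V] (μ : Measure V) [μ.IsAddHaarMeasure] {s : ℝ}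

theorem ofReal_pow_mul_lintegral_rpow_le {g : V → ℝ≥0∞} (hg : IsLogConcave g) (hg₀ : g 0 = 1)
    (hs₀ : 0 < s) (hs₁ : s < 1) :
    ENNReal.ofReal (s ^ finrank ℝ V) * ∫⁻ x, g x ^ s ∂μ ≤ ∫⁻ x, g x ∂μ := by
  rw [← ofReal_pow_mul_lintegral_comp_smul μ g hs₀]
  gcongr with x
  exact hg.rpow_le_smul hg₀ hs₀ hs₁ x

theorem ofReal_pow_mul_lintegral_symmProj_rpow_le {W : Type*} [NormedAddCommGroup W]
    [NormedSpace ℝ W] {f : V × W → ℝ≥0∞} (hf : IsLogConcave f) (hf₁ : ∀ x, f x ≤ 1)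
    (hf₀ : f 0 = 1) (hs₀ : 0 < s) (hs₁ : s < 1) :
    ENNReal.ofReal (s ^ finrank ℝ V) * ∫⁻ t, symmProj f (0, t) ^ s ∂μ ≤
      ∫⁻ t, symmProj f (0, t) ∂μ := by
  have hle_one : ∀ p, symmProj f p ≤ 1 := fun p =>
    iSup_le fun w => (min_le_left _ _).trans (hf₁ _)
  refine ofReal_pow_mul_lintegral_rpow_le μ
    (hf.symmProj.comp_linearMap (.inr ℝ (V × W) V)) ((hle_one _).antisymm ?_) hs₀ hs₁
  simpa [hf₀] using min_le_symmProj f 0 0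

end RpowIntegral

section Core

variable {A B : Type*} [NormedAddCommGroup A] [NormedSpace ℝ A] [MeasurableSpace A]
  [NormedAddCommGroup B] [NormedSpace ℝ B] [FiniteDimensional ℝ B] [MeasurableSpace B]
  [BorelSpace B] {f : A × B → ℝ≥0∞}

theorem ofReal_pow_mul_lintegral_mul_projFst_le (ν : Measure B) [ν.IsAddHaarMeasure]
    (hf : IsLogConcave f) (hf_meas : Measurable f) (hf₁ : ∀ x, f x ≤ 1) {θ : ℝ} (hθ₀ : 0 < θ)
    (hθ₁ : θ < 1) (z₀ z : A) :
    ENNReal.ofReal ((1 - θ) ^ finrank ℝ B) * (∫⁻ w, f (z₀, w) ∂ν) * projFst f z ≤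
      ∫⁻ w, f ((1 - θ) • z₀ + θ • z, w) ∂ν := by
  rw [projFst, ENNReal.mul_iSup]
  refine iSup_le fun w₀ => ?_
  rw [← ofReal_pow_mul_lintegral_comp_add_smul ν (fun w => f ((1 - θ) • z₀ + θ • z, w))
    (sub_pos.2 hθ₁) (θ • w₀), mul_assoc, ← lintegral_mul_const _ (by fun_prop)]
  gcongr with w
  convert hf.mul_le_of_le_one hf₁ (sub_pos.2 hθ₁) hθ₀ (sub_add_cancel 1 θ) (z₀, w) (z, w₀)
    using 2
  simp [add_comm]

variable [FiniteDimensional ℝ A] [BorelSpace A]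

-- A functional Rogers–Shephard inequality: a fat slice and a large projection force a large
-- integral.
theorem lintegral_slice_mul_lintegral_projFst_le (μ : Measure A) [μ.IsAddHaarMeasure]
    (ν : Measure B) [ν.IsAddHaarMeasure] (hf : IsLogConcave f) (hf_lsc : LowerSemicontinuous f)
    (hf₁ : ∀ x, f x ≤ 1) {θ : ℝ} (hθ₀ : 0 < θ) (hθ₁ : θ < 1) (z₀ : A) :
    (∫⁻ w, f (z₀, w) ∂ν) *
        (ENNReal.ofReal (θ ^ finrank ℝ A * (1 - θ) ^ finrank ℝ B) * ∫⁻ z, projFst f z ∂μ) ≤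
      ∫⁻ p, f p ∂μ.prod ν := by
  have hf_meas := hf_lsc.measurable
  calc (∫⁻ w, f (z₀, w) ∂ν) *
        (ENNReal.ofReal (θ ^ finrank ℝ A * (1 - θ) ^ finrank ℝ B) * ∫⁻ z, projFst f z ∂μ)
      = ENNReal.ofReal (θ ^ finrank ℝ A) * ∫⁻ z,
          ENNReal.ofReal ((1 - θ) ^ finrank ℝ B) * (∫⁻ w, f (z₀, w) ∂ν) * projFst f z ∂μ := by
        rw [lintegral_const_mul _ (lowerSemicontinuous_projFst hf_lsc).measurable,
          ENNReal.ofReal_mul (by positivity)]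
        ring
    _ ≤ ENNReal.ofReal (θ ^ finrank ℝ A) *
          ∫⁻ z, ∫⁻ w, f ((1 - θ) • z₀ + θ • z, w) ∂ν ∂μ := by
        gcongr with z
        exact ofReal_pow_mul_lintegral_mul_projFst_le ν hf hf_meas hf₁ hθ₀ hθ₁ z₀ z
    _ = ∫⁻ p, f p ∂μ.prod ν := by
        rw [ofReal_pow_mul_lintegral_comp_add_smul μ (fun z => ∫⁻ w, f (z, w) ∂ν) hθ₀,
          lintegral_prod _ (by fun_prop)]

theorem lintegral_slice_rpow_half_mul_le (ν : Measure B) [ν.IsAddHaarMeasure]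
    (hf : IsLogConcave f) (hf_lsc : LowerSemicontinuous f) (hf₁ : ∀ x, f x ≤ 1)
    (l : A × B →L[ℝ] ℝ) {θ : ℝ} (hθ₀ : 0 ≤ θ) (hθ₁ : θ ≤ 1) (c t : A) :
    (∫⁻ w, f (c - t, w) * expWeight l (c - t, w) ∂ν) ^ (2⁻¹ : ℝ) *
        (∫⁻ w, f (c + t, w) * expWeight l (c + t, w) ∂ν) ^ (2⁻¹ : ℝ) ≤
      ∫⁻ w, expWeight l (c, w) * (f (c, w) ^ (1 - θ) * symmProj f ((c, w), t) ^ (θ / 2)) ∂ν := by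
  have hf_meas := hf_lsc.measurable
  have hsymm_meas := (lowerSemicontinuous_symmProj hf_lsc).measurable
  have hexp_meas := measurable_expWeight l
  refine IsPrekopaLeindler.addHaar ν (a := 2⁻¹) (b := 2⁻¹) (by norm_num) (by norm_num)
    (by norm_num) (by fun_prop) (by fun_prop) (by fun_prop) fun u v => ?_
  set p : A × B := (c, (2⁻¹ : ℝ) • u + (2⁻¹ : ℝ) • v) with hp
  set d : A × B := (t, (2⁻¹ : ℝ) • v - (2⁻¹ : ℝ) • u) with hd
  have hsub : ((c - t, u) : A × B) = p - d := by
    ext <;> simp only [hp, hd, Prod.fst_sub, Prod.snd_sub]; module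
  have hadd : ((c + t, v) : A × B) = p + d := by
    ext <;> simp only [hp, hd, Prod.fst_add, Prod.snd_add]; module
  have hmid : (2⁻¹ : ℝ) • (p - d) + (2⁻¹ : ℝ) • (p + d) = p := by module
  have hexp := expWeight_rpow_mul_rpow l 2⁻¹ 2⁻¹ (p - d) (p + d)
  rw [hsub, hadd, ENNReal.mul_rpow_of_nonneg _ _ (by norm_num),
    ENNReal.mul_rpow_of_nonneg _ _ (by norm_num), mul_mul_mul_comm, hexp, hmid, mul_comm]
  exact mul_le_mul_right (rpow_half_mul_rpow_half_le hf hf₁ hθ₀ hθ₁ p d) _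

theorem sq_lintegral_slice_rpow_half_le (μ : Measure A) [μ.IsAddHaarMeasure] (ν : Measure B)
    [ν.IsAddHaarMeasure] (hf : IsLogConcave f) (hf_lsc : LowerSemicontinuous f)
    (hf₁ : ∀ x, f x ≤ 1) (l : A × B →L[ℝ] ℝ) {θ : ℝ} (hθ₀ : 0 ≤ θ) (hθ₁ : θ ≤ 1) :
    (∫⁻ z, (∫⁻ w, f (z, w) * expWeight l (z, w) ∂ν) ^ (2⁻¹ : ℝ) ∂μ) ^ 2 ≤
      ENNReal.ofReal (2 ^ finrank ℝ A) * ∫⁻ c, expWeight l c *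
        (f c ^ (1 - θ) * ∫⁻ t, symmProj f (c, t) ^ (θ / 2) ∂μ) ∂μ.prod ν := by
  have hf_meas := hf_lsc.measurable
  have hsymm_meas := (lowerSemicontinuous_symmProj hf_lsc).measurable
  have hexp_meas := measurable_expWeight l
  set S : A → ℝ≥0∞ := fun z => (∫⁻ w, f (z, w) * expWeight l (z, w) ∂ν) ^ (2⁻¹ : ℝ)
  have hS : Measurable S := (hf_meas.mul hexp_meas).lintegral_prod_right'.pow_const _
  have : Measurable fun c => ∫⁻ t, symmProj f (c, t) ^ (θ / 2) ∂μ :=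
    (hsymm_meas.pow_const _).lintegral_prod_right'
  calc (∫⁻ z, S z ∂μ) ^ 2 = ∫⁻ x, ∫⁻ y, S x * S y ∂μ ∂μ := by
        simp_rw [lintegral_const_mul _ hS]
        rw [lintegral_mul_const _ hS, sq]
    _ = ENNReal.ofReal (2 ^ finrank ℝ A) * ∫⁻ c, ∫⁻ t, S (c - t) * S (c + t) ∂μ ∂μ :=
        lintegral_lintegral_eq_two_pow_mul μ (R := fun p => S p.1 * S p.2) (by fun_prop)
    _ ≤ ENNReal.ofReal (2 ^ finrank ℝ A) * ∫⁻ c, ∫⁻ t, ∫⁻ w, expWeight l (c, w) *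
          (f (c, w) ^ (1 - θ) * symmProj f ((c, w), t) ^ (θ / 2)) ∂ν ∂μ ∂μ := by
        gcongr with c t
        exact lintegral_slice_rpow_half_mul_le ν hf hf_lsc hf₁ l hθ₀ hθ₁ c t
    _ = ENNReal.ofReal (2 ^ finrank ℝ A) * ∫⁻ c, expWeight l c *
          (f c ^ (1 - θ) * ∫⁻ t, symmProj f (c, t) ^ (θ / 2) ∂μ) ∂μ.prod ν := by
        rw [lintegral_prod _ (by fun_prop)]
        congr with c
        rw [lintegral_lintegral_swap (by fun_prop)]
        congr with w
        rw [lintegral_const_mul _ (by fun_prop), lintegral_const_mul _ (by fun_prop)]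

theorem half_pow_le_one_sub_pow {k n : ℕ} (hk : 0 < k) (hkn : k ≤ n) :
    (1 / 2 : ℝ) ^ k ≤ (1 - k / (2 * n)) ^ n := by
  have hn : 0 < n := hk.trans_le hkn
  have hratio : (1 : ℝ) ≤ n / k := by
    rw [one_le_div (by positivity)]
    exact_mod_cast hkn
  have hnonneg : (k : ℝ) / (2 * n) ≤ 1 := by
    rw [div_le_one (by positivity)]
    norm_cast
    omega
  have hbernoulli : (1 / 2 : ℝ) ≤ (1 - k / (2 * n)) ^ ((n : ℝ) / k) := by
    convert one_add_mul_self_le_rpow_one_add (s := -(k / (2 * n))) (by linarith) hratio using 1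
    · field_simp
      norm_num
    · rw [sub_eq_add_neg]
  calc (1 / 2 : ℝ) ^ k ≤ ((1 - k / (2 * n)) ^ ((n : ℝ) / k)) ^ k := by gcongr
    _ = (1 - k / (2 * n)) ^ n := by
      rw [← Real.rpow_mul_natCast (by linarith), div_mul_cancel₀ _ (by positivity),
        Real.rpow_natCast]

-- The value `θ = k / (2 (k + m))` balances `θ ^ (2 k)` against `(1 - θ) ^ (2 (k + m))`.
theorem two_pow_le_const_pow_mul {k m : ℕ} (hk : 0 < k) {θ : ℝ}
    (hθ : θ = k / (2 * (k + m : ℕ))) :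
    (2 : ℝ) ^ k ≤ (64 * (((k + m : ℕ) : ℝ) / k) ^ 2) ^ k *
      ((1 - θ) ^ (k + m) * (θ / 2) ^ k * (θ ^ k * (1 - θ) ^ m)) := by
  have hθ₀ : 0 < θ := by rw [hθ]; positivity
  have hθ₁ : 0 ≤ 1 - θ := by
    rw [hθ, sub_nonneg, div_le_one (by positivity)]
    norm_cast
    omega
  have hhalf : (1 / 2 : ℝ) ^ k ≤ (1 - θ) ^ (k + m) := hθ ▸ half_pow_le_one_sub_pow hk (by omega)
  have hpow_le : (1 - θ) ^ (k + m) ≤ (1 - θ) ^ m :=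
    pow_le_pow_of_le_one hθ₁ (by linarith) (by omega)
  have hscale : (64 * (((k + m : ℕ) : ℝ) / k) ^ 2) * (θ / 2 * θ) = 8 := by
    rw [hθ]
    field_simp
    norm_num
  calc (2 : ℝ) ^ k = 8 ^ k * ((1 / 2) ^ k * (1 / 2) ^ k) := by
        rw [← mul_pow, ← mul_pow]
        norm_num
    _ ≤ 8 ^ k * ((1 - θ) ^ (k + m) * (1 - θ) ^ m) := by
        gcongr
        exact hhalf.trans hpow_le
    _ = _ := by rw [← hscale, mul_pow, mul_pow (θ / 2)]; ring

theorem IsLogConcave.iSup_rpow_half_mul_lintegral_le (μ : Measure A) [μ.IsAddHaarMeasure]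
    {P : A → ℝ≥0∞} (hP : IsLogConcave P) (hP_meas : Measurable P) (z : A) :
    (⨆ b, P (b + z) ^ (2⁻¹ : ℝ) * P b ^ (2⁻¹ : ℝ)) * ∫⁻ x, P x ∂μ ≤
      ENNReal.ofReal (2 ^ finrank ℝ A) * ∫⁻ u, P (u + (2⁻¹ : ℝ) • z) * P u ∂μ := by
  rw [ENNReal.iSup_mul]
  refine iSup_le fun b => ?_
  have hmid := fun x y =>
    hP (a := 2⁻¹) (b := 2⁻¹) (by norm_num) (by norm_num) (by norm_num) x y
  calc P (b + z) ^ (2⁻¹ : ℝ) * P b ^ (2⁻¹ : ℝ) * ∫⁻ x, P x ∂μ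
      = ∫⁻ x, (P (b + z) ^ (2⁻¹ : ℝ) * P x ^ (2⁻¹ : ℝ)) *
          (P b ^ (2⁻¹ : ℝ) * P x ^ (2⁻¹ : ℝ)) ∂μ := by
        rw [← lintegral_const_mul _ hP_meas]
        congr with x
        rw [mul_mul_mul_comm, ← ENNReal.rpow_add_of_nonneg _ _ (by norm_num) (by norm_num)]
        norm_num
    _ ≤ ∫⁻ x, P ((2⁻¹ : ℝ) • b + (2⁻¹ : ℝ) • x + (2⁻¹ : ℝ) • z) *
          P ((2⁻¹ : ℝ) • b + (2⁻¹ : ℝ) • x) ∂μ := by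
        refine lintegral_mono fun x => mul_le_mul' ((hmid (b + z) x).trans_eq ?_) (hmid b x)
        congr 1
        module
    _ = ENNReal.ofReal (2 ^ finrank ℝ A) * ∫⁻ u, P (u + (2⁻¹ : ℝ) • z) * P u ∂μ := by
        rw [← ofReal_pow_mul_lintegral_comp_add_smul μ
            (fun u => P (u + (2⁻¹ : ℝ) • z) * P u) (inv_pos.2 two_pos) ((2⁻¹ : ℝ) • b),
          ← mul_assoc, ← ENNReal.ofReal_mul (by positivity), ← mul_pow]
        norm_num

-- A functional difference-body inequality.
theorem IsLogConcave.lintegral_iSup_rpow_half_mul_le (μ : Measure A) [μ.IsAddHaarMeasure]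
    {P : A → ℝ≥0∞} (hP : IsLogConcave P) (hP_meas : Measurable P) (hP₀ : ∫⁻ x, P x ∂μ ≠ 0)
    (hP_top : ∫⁻ x, P x ∂μ ≠ ∞) :
    ∫⁻ z, (⨆ b, P (b + z) ^ (2⁻¹ : ℝ) * P b ^ (2⁻¹ : ℝ)) ∂μ ≤
      ENNReal.ofReal (4 ^ finrank ℝ A) * ∫⁻ x, P x ∂μ := by
  rw [← ENNReal.mul_le_mul_iff_left hP₀ hP_top]
  calc (∫⁻ z, (⨆ b, P (b + z) ^ (2⁻¹ : ℝ) * P b ^ (2⁻¹ : ℝ)) ∂μ) * ∫⁻ x, P x ∂μ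
      ≤ ∫⁻ z, (⨆ b, P (b + z) ^ (2⁻¹ : ℝ) * P b ^ (2⁻¹ : ℝ)) * ∫⁻ x, P x ∂μ ∂μ :=
        lintegral_mul_const_le _ _
    _ ≤ ∫⁻ z, ENNReal.ofReal (2 ^ finrank ℝ A) * ∫⁻ u, P (u + (2⁻¹ : ℝ) • z) * P u ∂μ ∂μ :=
        lintegral_mono fun z => hP.iSup_rpow_half_mul_lintegral_le μ hP_meas z
    _ = ENNReal.ofReal (4 ^ finrank ℝ A) * ∫⁻ z, ∫⁻ u, P (u + z) * P u ∂μ ∂μ := by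
        rw [lintegral_const_mul' _ _ ENNReal.ofReal_ne_top,
          ← ofReal_pow_mul_lintegral_comp_smul μ (fun z => ∫⁻ u, P (u + z) * P u ∂μ)
            (inv_pos.2 two_pos), ← mul_assoc,
          ← ENNReal.ofReal_mul (by positivity), ← mul_pow]
        norm_num
    _ = ENNReal.ofReal (4 ^ finrank ℝ A) * ∫⁻ u, ∫⁻ z, P (u + z) * P u ∂μ ∂μ := by
        rw [lintegral_lintegral_swap (by fun_prop)]
    _ = ENNReal.ofReal (4 ^ finrank ℝ A) * (∫⁻ x, P x ∂μ) * ∫⁻ x, P x ∂μ := by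
        have hshift : ∀ u, ∫⁻ z, P (u + z) * P u ∂μ = (∫⁻ x, P x ∂μ) * P u := fun u => by
          rw [lintegral_mul_const _ (by fun_prop), lintegral_add_left_eq_self]
        simp_rw [hshift]
        rw [lintegral_const_mul _ hP_meas, mul_assoc]

namespace IsCenteredLogConcave

variable {μ : Measure A} [μ.IsAddHaarMeasure] {ν : Measure B}

theorem exists_lintegral_symmProj_mul_expWeight_le (hf : IsCenteredLogConcave (μ.prod ν) f)
    {s : ℝ} (hs : 0 ≤ s) (htop : ∫⁻ t, symmProj f (0, t) ^ s ∂μ ≠ ∞) :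
    ∃ l : A × B →L[ℝ] ℝ, ∀ c,
      (∫⁻ t, symmProj f (c, t) ^ s ∂μ) * expWeight l c ≤ ∫⁻ t, symmProj f (0, t) ^ s ∂μ := by
  have hlsc : LowerSemicontinuous fun p => symmProj f p ^ s :=
    lowerSemicontinuous_rpow (lowerSemicontinuous_symmProj hf.lowerSemicontinuous) hs
  have hne_zero : symmProj f ((0, 0) : (A × B) × A) ^ s ≠ 0 := by
    have h := min_le_symmProj f 0 0
    simp only [add_zero, sub_zero, min_self, hf.map_zero] at h
    exact (one_pos.trans_le (ENNReal.one_rpow s ▸ ENNReal.rpow_le_rpow h hs)).ne'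
  have hsupp : ∀ᶠ c in nhds (0 : A × B), ∫⁻ t, symmProj f (c, t) ^ s ∂μ ≠ 0 := by
    have hnear : ∀ᶠ c in nhds (0 : A × B), 0 < symmProj f (c, 0) ^ s :=
      (hlsc.comp (Continuous.prodMk_left (0 : A))) 0 0 (pos_iff_ne_zero.2 hne_zero)
    filter_upwards [hnear] with c hc
    exact lintegral_ne_zero_of_lowerSemicontinuous μ (hlsc.comp (Continuous.prodMk_right c)) hc.ne'
  exact ((hf.isLogConcave.symmProj.rpow hs).lintegral_snd μ hlsc.measurable).exists_mul_expWeight_le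
    (mem_interior_iff_mem_nhds.2 hsupp) htop

variable [ν.IsAddHaarMeasure]

-- Centering absorbs the weight in Cauchy–Schwarz, and Rogers–Shephard bounds the largest slice.
theorem lintegral_mul_lintegral_projFst_le (hf : IsCenteredLogConcave (μ.prod ν) f)
    (l : A × B →L[ℝ] ℝ) {θ : ℝ} (hθ₀ : 0 < θ) (hθ₁ : θ < 1) :
    (∫⁻ p, f p ∂μ.prod ν) *
        (ENNReal.ofReal (θ ^ finrank ℝ A * (1 - θ) ^ finrank ℝ B) * ∫⁻ z, projFst f z ∂μ) ≤
      (∫⁻ z, (∫⁻ w, f (z, w) * expWeight l (z, w) ∂ν) ^ (2⁻¹ : ℝ) ∂μ) ^ 2 := by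
  have hf_meas := hf.lowerSemicontinuous.measurable
  set I := ∫⁻ p, f p ∂μ.prod ν with hI
  set X := ENNReal.ofReal (θ ^ finrank ℝ A * (1 - θ) ^ finrank ℝ B) * ∫⁻ z, projFst f z ∂μ
  set S := ∫⁻ z, (∫⁻ w, f (z, w) * expWeight l (z, w) ∂ν) ^ (2⁻¹ : ℝ) ∂μ
  set M := ⨆ z, ∫⁻ w, f (z, w) ∂ν
  have hsq : I ^ 2 ≤ M * S ^ 2 := by
    refine le_trans ?_ (sq_lintegral_mul_rpow_half_le μ ν hf_meas (measurable_expWeight l))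
    gcongr
    simpa only [expWeight_smul] using hf.lintegral_le_expWeight ((2⁻¹ : ℝ) • l)
  have hM : M * X ≤ I := by
    rw [ENNReal.iSup_mul]
    exact iSup_le fun z => lintegral_slice_mul_lintegral_projFst_le μ ν hf.isLogConcave
      hf.lowerSemicontinuous hf.le_one hθ₀ hθ₁ z
  rw [← ENNReal.mul_le_mul_iff_right hf.lintegral_ne_zero hf.lintegral_ne_top, ← hI]
  calc I * (I * X) = I ^ 2 * X := by ring
    _ ≤ M * S ^ 2 * X := by gcongr
    _ = M * X * S ^ 2 := by ring
    _ ≤ I * S ^ 2 := by gcongr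

theorem lintegral_mul_le_mul_lintegral_rpow (hf : IsCenteredLogConcave (μ.prod ν) f) {θ : ℝ}
    (hθ₀ : 0 < θ) (hθ₁ : θ < 1) (htop : ∫⁻ t, symmProj f (0, t) ^ (θ / 2) ∂μ ≠ ∞) :
    (∫⁻ p, f p ∂μ.prod ν) *
        (ENNReal.ofReal (θ ^ finrank ℝ A * (1 - θ) ^ finrank ℝ B) * ∫⁻ z, projFst f z ∂μ) ≤
      ENNReal.ofReal (2 ^ finrank ℝ A) *
        ((∫⁻ t, symmProj f (0, t) ^ (θ / 2) ∂μ) * ∫⁻ c, f c ^ (1 - θ) ∂μ.prod ν) := by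
  obtain ⟨l, hl⟩ := hf.exists_lintegral_symmProj_mul_expWeight_le (half_pos hθ₀).le htop
  refine (hf.lintegral_mul_lintegral_projFst_le l hθ₀ hθ₁).trans <|
    (sq_lintegral_slice_rpow_half_le μ ν hf.isLogConcave hf.lowerSemicontinuous hf.le_one l
      hθ₀.le hθ₁.le).trans ?_
  rw [← lintegral_const_mul _ (hf.lowerSemicontinuous.measurable.pow_const _)]
  refine mul_le_mul_right (lintegral_mono fun c => ?_) _
  rw [mul_left_comm, mul_comm, mul_comm (expWeight l c)]
  exact mul_le_mul_left (hl c) _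

theorem ofReal_mul_lintegral_projFst_le_mul_lintegral_symmProj
    (hf : IsCenteredLogConcave (μ.prod ν) f) {θ : ℝ} (hθ₀ : 0 < θ) (hθ₁ : θ < 1) :
    ENNReal.ofReal ((1 - θ) ^ (finrank ℝ A + finrank ℝ B) * (θ / 2) ^ finrank ℝ A *
        (θ ^ finrank ℝ A * (1 - θ) ^ finrank ℝ B)) * ∫⁻ z, projFst f z ∂μ ≤
      ENNReal.ofReal (2 ^ finrank ℝ A) * ∫⁻ z, symmProj f (0, z) ∂μ := by
  have hθ' : 0 < 1 - θ := sub_pos.2 hθ₁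
  set I := ∫⁻ p, f p ∂μ.prod ν with hI
  set J := ∫⁻ c, f c ^ (1 - θ) ∂μ.prod ν
  set X := ENNReal.ofReal (θ ^ finrank ℝ A * (1 - θ) ^ finrank ℝ B) * ∫⁻ z, projFst f z ∂μ
  set D := ∫⁻ z, symmProj f (0, z) ∂μ
  set Γ : A × B → ℝ≥0∞ := fun c => ∫⁻ t, symmProj f (c, t) ^ (θ / 2) ∂μ
  have hJ_le : ENNReal.ofReal ((1 - θ) ^ (finrank ℝ A + finrank ℝ B)) * J ≤ I := by
    rw [← Module.finrank_prod]
    exact ofReal_pow_mul_lintegral_rpow_le _ hf.isLogConcave hf.map_zero hθ' (by linarith)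
  have hΓ_le : ENNReal.ofReal ((θ / 2) ^ finrank ℝ A) * Γ 0 ≤ D :=
    ofReal_pow_mul_lintegral_symmProj_rpow_le μ hf.isLogConcave hf.le_one hf.map_zero
      (by positivity) (by linarith)
  rcases eq_or_ne D ∞ with hD | hD
  · simp [hD, ENNReal.mul_top]
  have hΓ_top : Γ 0 ≠ ∞ := fun h => hD <| top_le_iff.1 <| hΓ_le.trans' <| by
    rw [h, ENNReal.mul_top (ENNReal.ofReal_pos.2 (by positivity)).ne']
  have hIX : I * X ≤ ENNReal.ofReal (2 ^ finrank ℝ A) * (Γ 0 * J) :=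
    hf.lintegral_mul_le_mul_lintegral_rpow hθ₀ hθ₁ hΓ_top
  rw [← ENNReal.mul_le_mul_iff_right hf.lintegral_ne_zero hf.lintegral_ne_top, ← hI,
    ENNReal.ofReal_mul (by positivity), ENNReal.ofReal_mul (by positivity)]
  calc I * (ENNReal.ofReal ((1 - θ) ^ (finrank ℝ A + finrank ℝ B)) *
          ENNReal.ofReal ((θ / 2) ^ finrank ℝ A) *
          ENNReal.ofReal (θ ^ finrank ℝ A * (1 - θ) ^ finrank ℝ B) * ∫⁻ z, projFst f z ∂μ)
      = ENNReal.ofReal ((1 - θ) ^ (finrank ℝ A + finrank ℝ B)) *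
          ENNReal.ofReal ((θ / 2) ^ finrank ℝ A) * (I * X) := by ring
    _ ≤ ENNReal.ofReal ((1 - θ) ^ (finrank ℝ A + finrank ℝ B)) *
          ENNReal.ofReal ((θ / 2) ^ finrank ℝ A) *
          (ENNReal.ofReal (2 ^ finrank ℝ A) * (Γ 0 * J)) := by gcongr
    _ = (ENNReal.ofReal ((1 - θ) ^ (finrank ℝ A + finrank ℝ B)) * J) *
          (ENNReal.ofReal (2 ^ finrank ℝ A) *
            (ENNReal.ofReal ((θ / 2) ^ finrank ℝ A) * Γ 0)) := by ring
    _ ≤ I * (ENNReal.ofReal (2 ^ finrank ℝ A) * D) := by gcongr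

theorem lintegral_projFst_le_mul_lintegral_symmProj (hf : IsCenteredLogConcave (μ.prod ν) f)
    (hA : 0 < finrank ℝ A) :
    ∫⁻ z, projFst f z ∂μ ≤ ENNReal.ofReal ((64 * ((finrank ℝ A + finrank ℝ B : ℕ) /
      (finrank ℝ A : ℝ)) ^ 2) ^ finrank ℝ A) * ∫⁻ z, symmProj f (0, z) ∂μ := by
  set k := finrank ℝ A
  set m := finrank ℝ B
  obtain ⟨θ, hθ⟩ : ∃ θ : ℝ, θ = k / (2 * (k + m : ℕ)) := ⟨_, rfl⟩
  have hθ₀ : 0 < θ := by rw [hθ]; positivity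
  have hθ₁ : θ < 1 := by
    rw [hθ, div_lt_one (by positivity)]
    norm_cast
    omega
  have hconst := two_pow_le_const_pow_mul (m := m) hA hθ
  set c := (1 - θ) ^ (k + m) * (θ / 2) ^ k * (θ ^ k * (1 - θ) ^ m)
  set K := (64 * (((k + m : ℕ) : ℝ) / k) ^ 2) ^ k
  rw [← ENNReal.mul_le_mul_iff_right (a := ENNReal.ofReal (2 ^ k)) (by simp)
    ENNReal.ofReal_ne_top]
  calc ENNReal.ofReal (2 ^ k) * ∫⁻ z, projFst f z ∂μ
      ≤ ENNReal.ofReal K * (ENNReal.ofReal c * ∫⁻ z, projFst f z ∂μ) := by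
        rw [← mul_assoc, ← ENNReal.ofReal_mul (by positivity)]
        gcongr
    _ ≤ ENNReal.ofReal K * (ENNReal.ofReal (2 ^ k) * ∫⁻ z, symmProj f (0, z) ∂μ) := by
        exact mul_le_mul_right
          (hf.ofReal_mul_lintegral_projFst_le_mul_lintegral_symmProj hθ₀ hθ₁) _
    _ = ENNReal.ofReal (2 ^ k) * (ENNReal.ofReal K * ∫⁻ z, symmProj f (0, z) ∂μ) := by ring

theorem lintegral_iSup_projFst_le (hf : IsCenteredLogConcave (μ.prod ν) f)
    (hA : 0 < finrank ℝ A) :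
    ∫⁻ z, (⨆ b, projFst f (b + z) ^ (2⁻¹ : ℝ) * projFst f b ^ (2⁻¹ : ℝ)) ∂μ ≤
      ENNReal.ofReal ((256 * ((finrank ℝ A + finrank ℝ B : ℕ) / (finrank ℝ A : ℝ)) ^ 2) ^
        finrank ℝ A) * ∫⁻ z, symmProj f (0, z) ∂μ := by
  have hle := hf.lintegral_projFst_le_mul_lintegral_symmProj hA
  rcases eq_or_ne (∫⁻ z, symmProj f (0, z) ∂μ) ∞ with htop | htop
  · rw [htop, ENNReal.mul_top (ENNReal.ofReal_pos.2 (by positivity)).ne']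
    exact le_top
  have hlsc := lowerSemicontinuous_projFst hf.lowerSemicontinuous
  have hne_zero : ∫⁻ z, projFst f z ∂μ ≠ 0 := by
    have hone : 1 ≤ projFst f 0 := hf.map_zero.ge.trans (le_iSup (fun w => f (0, w)) 0)
    exact lintegral_ne_zero_of_lowerSemicontinuous μ hlsc (one_pos.trans_le hone).ne'
  have hne_top : ∫⁻ z, projFst f z ∂μ ≠ ∞ :=
    ne_top_of_le_ne_top (ENNReal.mul_ne_top ENNReal.ofReal_ne_top htop) hle
  calc ∫⁻ z, (⨆ b, projFst f (b + z) ^ (2⁻¹ : ℝ) * projFst f b ^ (2⁻¹ : ℝ)) ∂μ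
      ≤ ENNReal.ofReal (4 ^ finrank ℝ A) * ∫⁻ z, projFst f z ∂μ :=
        hf.isLogConcave.iSup_snd.lintegral_iSup_rpow_half_mul_le μ hlsc.measurable hne_zero
          hne_top
    _ ≤ _ := mul_le_mul_right hle _
    _ = _ := by
        rw [← mul_assoc, ← ENNReal.ofReal_mul (by positivity), ← mul_pow, ← mul_assoc]
        norm_num

end IsCenteredLogConcave

end Core

/-! ### Regularization of centered log-concave functions -/

section Bounded

variable {V : Type*} [NormedAddCommGroup V] [NormedSpace ℝ V] {s : Set V}

theorem ball_midpoint_subset_of_convex (hs : Convex ℝ s) {x x₀ : V} {r : ℝ} (hx : x ∈ s)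
    (hball : ball x₀ r ⊆ s) : ball (midpoint ℝ x x₀) (r / 2) ⊆ s := by
  intro y hy
  have hmem : x₀ + (2 : ℝ) • (y - midpoint ℝ x x₀) ∈ s := hball <| by
    rw [mem_ball, dist_eq_norm] at hy ⊢
    rw [add_sub_cancel_left, norm_smul, Real.norm_ofNat]
    linarith
  convert hs hx hmem (a := 2⁻¹) (b := 2⁻¹) (by norm_num) (by norm_num) (by norm_num)
  rw [midpoint_eq_smul_add, invOf_eq_inv]
  module

-- A far away point `x ∈ s` puts a ball of fixed radius about the midpoint of `x` and an interior
-- point into `s`, contradicting the tightness of the finite measure `μ.restrict s`.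
theorem isBounded_of_convex_of_measure_ne_top [FiniteDimensional ℝ V] [MeasurableSpace V]
    [BorelSpace V] (μ : Measure V) [μ.IsAddHaarMeasure] (hs : Convex ℝ s)
    (hs_int : (interior s).Nonempty) (hs_top : μ s ≠ ∞) : Bornology.IsBounded s := by
  obtain ⟨x₀, hx₀⟩ := hs_int
  obtain ⟨r, hr, hball⟩ := Metric.mem_nhds_iff.1 (mem_interior_iff_mem_nhds.1 hx₀)
  have : IsFiniteMeasure (μ.restrict s) := ⟨by simpa using hs_top.lt_top⟩
  have htail := tendsto_measure_compl_closedBall_of_isTightMeasureSet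
    (isTightMeasureSet_singleton (μ := μ.restrict s)) x₀
  simp only [mem_singleton_iff, iSup_iSup_eq_left] at htail
  obtain ⟨R, hR⟩ :=
    (htail.eventually_lt_const (measure_ball_pos μ (0 : V) (half_pos hr))).exists
  refine isBounded_closedBall.subset (t := closedBall x₀ (2 * R + r)) fun x hx => ?_
  by_contra hfar
  have hball_far : ball (midpoint ℝ x x₀) (r / 2) ⊆ (closedBall x₀ R)ᶜ := by
    intro y hy
    have htriangle := dist_triangle (midpoint ℝ x x₀) y x₀
    rw [dist_midpoint_right, Real.norm_ofNat] at htriangle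
    rw [mem_closedBall, not_le] at hfar
    rw [mem_compl_iff, mem_closedBall, not_le]
    rw [mem_ball'] at hy
    linarith
  refine hR.not_ge ?_
  rw [← Measure.addHaar_ball_center μ (midpoint ℝ x x₀), ← Measure.restrict_eq_self μ
    (ball_midpoint_subset_of_convex hs hx hball)]
  exact measure_mono hball_far

end Bounded

/-- The restriction of `f` to the interior of its support. For log-concave `f` it is lower
semicontinuous and agrees with `f` almost everywhere. -/
def interiorRestrict {V : Type*} [TopologicalSpace V] (f : V → ℝ≥0∞) : V → ℝ≥0∞ :=
  (interior (Function.support f)).indicator f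

theorem interiorRestrict_le {V : Type*} [TopologicalSpace V] (f : V → ℝ≥0∞) (x : V) :
    interiorRestrict f x ≤ f x :=
  indicator_le_self _ _ x

theorem isLogConcave_interiorRestrict {V : Type*} [NormedAddCommGroup V] [NormedSpace ℝ V]
    {f : V → ℝ≥0∞} (hf : IsLogConcave f) : IsLogConcave (interiorRestrict f) := by
  intro a b ha hb hab x y
  by_cases hx : x ∈ interior (Function.support f)
  swap; · simp [interiorRestrict, hx, ha]
  by_cases hy : y ∈ interior (Function.support f)
  swap; · simp [interiorRestrict, hy, hb]
  simpa [interiorRestrict, hx, hy, hf.convex_support.interior hx hy ha.le hb.le hab]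
    using hf ha hb hab x y

namespace IsLogConcave

variable {V : Type*} [NormedAddCommGroup V] [NormedSpace ℝ V] {f : V → ℝ≥0∞}

theorem le_interiorRestrict_half_smul (hf : IsLogConcave f) (hf₁ : ∀ x, f x ≤ 1) (hf₀ : f 0 = 1)
    (hsupp : 0 ∈ interior (Function.support f)) (x : V) :
    f x ≤ interiorRestrict f ((2⁻¹ : ℝ) • x) := by
  rcases eq_or_ne (f x) 0 with hx | hx
  · simp [hx]
  have hmem : (2⁻¹ : ℝ) • x ∈ interior (Function.support f) := by
    simpa using hf.convex_support.combo_interior_self_mem_interior hsupp hx (a := 2⁻¹) (b := 2⁻¹)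
      (by norm_num) (by norm_num) (by norm_num)
  rw [interiorRestrict, indicator_of_mem hmem]
  calc f x = f x ^ (1 : ℝ) := (ENNReal.rpow_one _).symm
    _ ≤ f x ^ (2⁻¹ : ℝ) := ENNReal.rpow_le_rpow_of_exponent_ge (hf₁ x) (by norm_num)
    _ ≤ f ((2⁻¹ : ℝ) • x) := hf.rpow_le_smul hf₀ (by norm_num) (by norm_num) x

theorem le_rpow_norm_div (hf : IsLogConcave f) (hf₀ : f 0 = 1) {δ : ℝ≥0∞} {R : ℝ} (hR : 0 < R)
    (hδ : ∀ x, R ≤ ‖x‖ → f x ≤ δ) {x : V} (hx : R < ‖x‖) : f x ≤ δ ^ (‖x‖ / R) := by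
  have hx₀ : 0 < ‖x‖ := hR.trans hx
  have hle : f x ^ (R / ‖x‖) ≤ δ :=
    (hf.rpow_le_smul hf₀ (by positivity) ((div_lt_one hx₀).2 hx) x).trans <| hδ _ <| by
      rw [norm_smul, Real.norm_of_nonneg (by positivity), div_mul_cancel₀ _ hx₀.ne']
  rw [← inv_div]
  exact (ENNReal.le_rpow_inv_iff (by positivity)).2 hle

variable [FiniteDimensional ℝ V]

theorem lowerSemicontinuous_interiorRestrict (hf : IsLogConcave f) (hf_top : ∀ x, f x ≠ ∞) :
    LowerSemicontinuous (interiorRestrict f) := by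
  intro x y hy
  by_cases hx : x ∈ interior (Function.support f)
  · have hnhds := isOpen_interior.mem_nhds hx
    rw [interiorRestrict, indicator_of_mem hx] at hy
    filter_upwards [hnhds, ((hf.continuousOn_interior_support hf_top).continuousAt
      hnhds).eventually_const_lt hy] with z hz hyz
    rwa [interiorRestrict, indicator_of_mem hz]
  · simp [interiorRestrict, hx] at hy

variable [MeasurableSpace V] [BorelSpace V] (μ : Measure V) [μ.IsAddHaarMeasure]

theorem interiorRestrict_ae_eq (hf : IsLogConcave f) : interiorRestrict f =ᵐ[μ] f := by
  have hnull : μ (frontier (Function.support f)) = 0 := hf.convex_support.addHaar_frontier μ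
  filter_upwards [measure_eq_zero_iff_ae_notMem.1 hnull] with x hx
  by_cases hx' : x ∈ interior (Function.support f)
  · exact indicator_of_mem hx' f
  · rw [interiorRestrict, indicator_of_notMem hx']
    by_contra hne
    exact hx ⟨subset_closure (Ne.symm hne), hx'⟩

theorem interior_support_nonempty (hf : IsLogConcave f) (hf₀ : ∫⁻ x, f x ∂μ ≠ 0) :
    (interior (Function.support f)).Nonempty := by
  by_contra hempty
  rw [not_nonempty_iff_eq_empty] at hempty
  refine hf₀ ?_
  rw [← lintegral_congr_ae (hf.interiorRestrict_ae_eq μ)]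
  simp [interiorRestrict, hempty]

theorem aemeasurable (hf : IsLogConcave f) (hf_top : ∀ x, f x ≠ ∞) : AEMeasurable f μ :=
  (hf.lowerSemicontinuous_interiorRestrict hf_top).measurable.aemeasurable.congr
    (hf.interiorRestrict_ae_eq μ)

variable {μ}

theorem exists_isBounded_setOf_lt (hf : IsLogConcave f) (hf₁ : ∀ x, f x ≤ 1)
    (hf_int₀ : ∫⁻ x, f x ∂μ ≠ 0) (hf_int : ∫⁻ x, f x ∂μ ≠ ∞) :
    ∃ δ, δ ≠ 0 ∧ δ < 1 ∧ Bornology.IsBounded {x | δ < f x} := by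
  have hf_top : ∀ x, f x ≠ ∞ := fun x => ((hf₁ x).trans_lt ENNReal.one_lt_top).ne
  obtain ⟨x₀, hx₀⟩ := hf.interior_support_nonempty μ hf_int₀
  obtain ⟨δ, hδ₀, hδ⟩ := exists_between (pos_iff_ne_zero.2 (interior_subset hx₀))
  refine ⟨δ, hδ₀.ne', hδ.trans_le (hf₁ x₀),
    isBounded_of_convex_of_measure_ne_top μ (hf.convex_setOf_lt δ) ⟨x₀, ?_⟩ ?_⟩
  · exact mem_interior_iff_mem_nhds.2 <| ((hf.continuousOn_interior_support hf_top).continuousAt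
      (isOpen_interior.mem_nhds hx₀)).eventually_const_lt hδ
  · refine ne_top_of_le_ne_top (ENNReal.div_ne_top hf_int hδ₀.ne') ?_
    exact (measure_mono (t := {x | δ ≤ f x}) fun x (hx : δ < f x) => hx.le).trans <|
      meas_ge_le_lintegral_div (hf.aemeasurable μ hf_top) hδ₀.ne' (hδ.trans_le le_top).ne

theorem exists_enorm_mul_le (hf : IsLogConcave f) (hf₁ : ∀ x, f x ≤ 1) (hf₀ : f 0 = 1)
    (hf_int₀ : ∫⁻ x, f x ∂μ ≠ 0) (hf_int : ∫⁻ x, f x ∂μ ≠ ∞) :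
    ∃ K ≠ ∞, ∀ x, ‖x‖ₑ * f x ≤ K := by
  obtain ⟨δ, hδ₀, hδ₁, hbdd⟩ := hf.exists_isBounded_setOf_lt hf₁ hf_int₀ hf_int
  obtain ⟨R, hR, hlt⟩ := hbdd.exists_pos_norm_lt
  have hδ_toReal := ENNReal.toReal_pos hδ₀ hδ₁.ne_top
  set c := -Real.log δ.toReal / R
  have hc : 0 < c := div_pos (neg_pos.2 (Real.log_neg hδ_toReal
    (by simpa using ENNReal.toReal_strict_mono ENNReal.one_ne_top hδ₁))) hR
  refine ⟨max (ENNReal.ofReal R) (ENNReal.ofReal c⁻¹), by simp, fun x => ?_⟩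
  rw [← ofReal_norm]
  rcases le_or_gt ‖x‖ R with hx | hx
  · exact le_max_of_le_left <|
      (mul_le_of_le_one_right' (hf₁ x)).trans (ENNReal.ofReal_le_ofReal hx)
  refine le_max_of_le_right ?_
  calc ENNReal.ofReal ‖x‖ * f x ≤ ENNReal.ofReal ‖x‖ * δ ^ (‖x‖ / R) := by
        gcongr
        exact hf.le_rpow_norm_div hf₀ hR (fun y hy => not_lt.1 fun h => (hlt y h).not_ge hy) hx
    _ = ENNReal.ofReal (‖x‖ * Real.exp (-(c * ‖x‖))) := by
        rw [← ENNReal.ofReal_toReal hδ₁.ne_top, ENNReal.ofReal_rpow_of_pos hδ_toReal,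
          ← ENNReal.ofReal_mul (norm_nonneg x), Real.rpow_def_of_pos hδ_toReal]
        congr 3
        ring
    _ ≤ ENNReal.ofReal c⁻¹ := by
        gcongr
        rw [Real.exp_neg, ← div_eq_mul_inv, div_le_iff₀ (Real.exp_pos _), inv_mul_eq_div,
          le_div_iff₀' hc]
        linarith [Real.add_one_le_exp (c * ‖x‖)]

theorem lintegral_enorm_mul_ne_top (hf : IsLogConcave f) (hf₁ : ∀ x, f x ≤ 1) (hf₀ : f 0 = 1)
    (hf_int₀ : ∫⁻ x, f x ∂μ ≠ 0) (hf_int : ∫⁻ x, f x ∂μ ≠ ∞) : ∫⁻ x, ‖x‖ₑ * f x ∂μ ≠ ∞ := by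
  obtain ⟨K, hK_top, hK⟩ := hf.exists_enorm_mul_le hf₁ hf₀ hf_int₀ hf_int
  have hhalf : ∀ x, f x ≤ f ((2⁻¹ : ℝ) • x) * f ((2⁻¹ : ℝ) • x) := fun x => by
    rw [← sq, ← ENNReal.rpow_two, ← ENNReal.rpow_inv_le_iff two_pos]
    exact hf.rpow_le_smul hf₀ (by norm_num) (by norm_num) x
  have hbound : ∀ x, ‖x‖ₑ * f x ≤ 2 * K * f ((2⁻¹ : ℝ) • x) := fun x => by
    have hdouble : ‖x‖ₑ = 2 * ‖(2⁻¹ : ℝ) • x‖ₑ := by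
      conv_lhs => rw [← smul_inv_smul₀ (two_ne_zero' ℝ) x, enorm_smul,
        Real.enorm_of_nonneg zero_le_two, ENNReal.ofReal_ofNat]
    calc ‖x‖ₑ * f x ≤ 2 * ‖(2⁻¹ : ℝ) • x‖ₑ * (f ((2⁻¹ : ℝ) • x) * f ((2⁻¹ : ℝ) • x)) :=
          mul_le_mul' hdouble.le (hhalf x)
      _ = 2 * (‖(2⁻¹ : ℝ) • x‖ₑ * f ((2⁻¹ : ℝ) • x)) * f ((2⁻¹ : ℝ) • x) := by ring
      _ ≤ 2 * K * f ((2⁻¹ : ℝ) • x) := by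
          gcongr
          exact hK _
  have hint : ∫⁻ x, f ((2⁻¹ : ℝ) • x) ∂μ ≠ ∞ := fun h => hf_int <| by
    rw [← ofReal_pow_mul_lintegral_comp_smul μ f (inv_pos.2 two_pos), h,
      ENNReal.mul_top (by simp)]
  have hK_top' : 2 * K ≠ ∞ := ENNReal.mul_ne_top ENNReal.ofNat_ne_top hK_top
  refine ne_top_of_le_ne_top (ENNReal.mul_ne_top hK_top' hint) ?_
  rw [← lintegral_const_mul' _ _ hK_top']
  exact lintegral_mono hbound

theorem integrable_toReal_smul (hf : IsLogConcave f) (hf₁ : ∀ x, f x ≤ 1) (hf₀ : f 0 = 1)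
    (hf_int₀ : ∫⁻ x, f x ∂μ ≠ 0) (hf_int : ∫⁻ x, f x ∂μ ≠ ∞) :
    Integrable (fun x => (f x).toReal • x) μ := by
  have hf_top : ∀ x, f x ≠ ∞ := fun x => ((hf₁ x).trans_lt ENNReal.one_lt_top).ne
  refine ⟨(hf.aemeasurable μ hf_top).ennreal_toReal.aestronglyMeasurable.smul
    aestronglyMeasurable_id, ?_⟩
  have henorm : ∀ x, ‖(f x).toReal • x‖ₑ = ‖x‖ₑ * f x := fun x => by
    rw [enorm_smul, Real.enorm_of_nonneg ENNReal.toReal_nonneg, ENNReal.ofReal_toReal (hf_top x),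
      mul_comm]
  simpa only [HasFiniteIntegral, henorm] using
    (hf.lintegral_enorm_mul_ne_top hf₁ hf₀ hf_int₀ hf_int).lt_top

end IsLogConcave

theorem ofReal_integral_le_lintegral_ofReal {X : Type*} [MeasurableSpace X] {μ : Measure X}
    {g : X → ℝ} (hg : Integrable g μ) :
    ENNReal.ofReal (∫ x, g x ∂μ) ≤ ∫⁻ x, ENNReal.ofReal (g x) ∂μ :=
  calc ENNReal.ofReal (∫ x, g x ∂μ) ≤ ENNReal.ofReal (∫ x, max (g x) 0 ∂μ) :=
        ENNReal.ofReal_le_ofReal (integral_mono hg hg.pos_part fun _ => le_max_left _ _)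
    _ = ∫⁻ x, ENNReal.ofReal (max (g x) 0) ∂μ :=
        ofReal_integral_eq_lintegral_ofReal hg.pos_part (.of_forall fun _ => le_max_right _ _)
    _ = ∫⁻ x, ENNReal.ofReal (g x) ∂μ := by simp [ENNReal.ofReal_max]

section Centered

variable {V : Type*} [NormedAddCommGroup V] [NormedSpace ℝ V] [MeasurableSpace V] {μ : Measure V}
  {f : V → ℝ≥0∞}

theorem integrable_toReal_mul (hf : Integrable (fun x => (f x).toReal • x) μ) (l : V →L[ℝ] ℝ) :
    Integrable (fun x => (f x).toReal * l x) μ := by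
  simpa using l.integrable_comp hf

theorem integral_toReal_mul_eq_zero [CompleteSpace V]
    (hf : Integrable (fun x => (f x).toReal • x) μ)
    (hf_cent : ∫ x, (f x).toReal • x ∂μ = 0) (l : V →L[ℝ] ℝ) :
    ∫ x, (f x).toReal * l x ∂μ = 0 := by
  simpa [hf_cent] using l.integral_comp_comm hf

theorem lintegral_le_lintegral_mul_expWeight [CompleteSpace V] (hf_meas : AEMeasurable f μ)
    (hf_top : ∀ x, f x ≠ ∞) (hf_int : ∫⁻ x, f x ∂μ ≠ ∞)
    (hf_smul : Integrable (fun x => (f x).toReal • x) μ)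
    (hf_cent : ∫ x, (f x).toReal • x ∂μ = 0) (l : V →L[ℝ] ℝ) :
    ∫⁻ x, f x ∂μ ≤ ∫⁻ x, f x * expWeight l x ∂μ := by
  have hf_toReal := integrable_toReal_of_lintegral_ne_top hf_meas hf_int
  have hl := integrable_toReal_mul hf_smul l
  calc ∫⁻ x, f x ∂μ = ENNReal.ofReal (∫ x, ((f x).toReal + (f x).toReal * l x) ∂μ) := by
        rw [integral_add hf_toReal hl, integral_toReal_mul_eq_zero hf_smul hf_cent, add_zero,
          integral_toReal hf_meas (.of_forall fun x => (hf_top x).lt_top),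
          ENNReal.ofReal_toReal hf_int]
    _ ≤ ∫⁻ x, ENNReal.ofReal ((f x).toReal + (f x).toReal * l x) ∂μ :=
        ofReal_integral_le_lintegral_ofReal (hf_toReal.add hl)
    _ ≤ ∫⁻ x, f x * expWeight l x ∂μ := by
        gcongr with x
        rw [expWeight]
        conv_rhs => rw [← ENNReal.ofReal_toReal (hf_top x)]
        rw [← ENNReal.ofReal_mul ENNReal.toReal_nonneg, ← mul_one_add]
        gcongr
        linarith [Real.add_one_le_exp (l x)]

variable [FiniteDimensional ℝ V] [BorelSpace V] [μ.IsAddHaarMeasure]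

theorem IsLogConcave.zero_mem_interior_support (hf : IsLogConcave f) (hf_top : ∀ x, f x ≠ ∞)
    (hf_int₀ : ∫⁻ x, f x ∂μ ≠ 0) (hf_smul : Integrable (fun x => (f x).toReal • x) μ)
    (hf_cent : ∫ x, (f x).toReal • x ∂μ = 0) : 0 ∈ interior (Function.support f) := by
  by_contra h0
  obtain ⟨l, hl⟩ := geometric_hahn_banach_open_point hf.convex_support.interior isOpen_interior h0
  rw [map_zero] at hl
  have hinterior : ∀ᵐ x ∂μ, f x ≠ 0 → l x < 0 := by
    filter_upwards [hf.interiorRestrict_ae_eq μ] with x hx hfx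
    exact hl x (mem_of_indicator_ne_zero (hx ▸ hfx))
  have hnonneg : 0 ≤ᵐ[μ] fun x => -((f x).toReal * l x) := by
    filter_upwards [hinterior] with x hx
    rcases eq_or_ne (f x) 0 with hfx | hfx
    · simp [hfx]
    · exact neg_nonneg.2 (mul_nonpos_of_nonneg_of_nonpos ENNReal.toReal_nonneg (hx hfx).le)
  have hzero := (integral_eq_zero_iff_of_nonneg_ae hnonneg (integrable_toReal_mul hf_smul l).neg).1
    (by rw [integral_neg, integral_toReal_mul_eq_zero hf_smul hf_cent, neg_zero])
  refine hf_int₀ ((lintegral_congr_ae ?_).trans lintegral_zero)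
  filter_upwards [hinterior, hzero] with x hx hx₀
  by_contra hfx
  refine neg_ne_zero.2 (mul_ne_zero ?_ (hx hfx).ne) hx₀
  exact (ENNReal.toReal_pos hfx (hf_top x)).ne'

theorem IsLogConcave.isCenteredLogConcave_interiorRestrict (hf : IsLogConcave f)
    (hf₁ : ∀ x, f x ≤ 1) (hf₀ : f 0 = 1) (hf_int₀ : ∫⁻ x, f x ∂μ ≠ 0)
    (hf_int : ∫⁻ x, f x ∂μ ≠ ∞) (hf_cent : ∫ x, (f x).toReal • x ∂μ = 0) :
    IsCenteredLogConcave μ (interiorRestrict f) := by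
  have hf_top : ∀ x, f x ≠ ∞ := fun x => ((hf₁ x).trans_lt ENNReal.one_lt_top).ne
  have hf_smul := hf.integrable_toReal_smul hf₁ hf₀ hf_int₀ hf_int
  have hae := hf.interiorRestrict_ae_eq μ
  exact
    { isLogConcave := isLogConcave_interiorRestrict hf
      lowerSemicontinuous := hf.lowerSemicontinuous_interiorRestrict hf_top
      le_one := fun x => (interiorRestrict_le f x).trans (hf₁ x)
      map_zero := (indicator_of_mem
        (hf.zero_mem_interior_support hf_top hf_int₀ hf_smul hf_cent) f).trans hf₀
      lintegral_ne_top := by rwa [lintegral_congr_ae hae]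
      lintegral_le_expWeight := fun l => by
        have hae_mul : ∀ᵐ x ∂μ, interiorRestrict f x * expWeight l x = f x * expWeight l x :=
          hae.mono fun x hx => by rw [hx]
        rw [lintegral_congr_ae hae, lintegral_congr_ae hae_mul]
        exact lintegral_le_lintegral_mul_expWeight (hf.aemeasurable μ hf_top) hf_top hf_int
          hf_smul hf_cent l }

end Centered

theorem IsCenteredLogConcave.comp_continuousLinearEquiv {V W : Type*} [NormedAddCommGroup V]
    [NormedSpace ℝ V] [FiniteDimensional ℝ V] [MeasurableSpace V] [BorelSpace V]
    [NormedAddCommGroup W] [NormedSpace ℝ W] [MeasurableSpace W] [BorelSpace W]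
    {μ : Measure V} [μ.IsAddHaarMeasure] {f : V → ℝ≥0∞} (hf : IsCenteredLogConcave μ f)
    (ν : Measure W) [ν.IsAddHaarMeasure] (e : W ≃L[ℝ] V) :
    IsCenteredLogConcave ν fun x => f (e x) := by
  have : (ν.map e).IsAddHaarMeasure := e.isAddHaarMeasure_map ν
  obtain ⟨c, hc⟩ : ∃ c : NNReal, ν.map e = (c : ℝ≥0∞) • μ :=
    ⟨_, Measure.isAddLeftInvariant_eq_smul _ _⟩
  have hmap : ∀ g : V → ℝ≥0∞, ∫⁻ x, g (e x) ∂ν = c * ∫⁻ x, g x ∂μ := fun g =>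
    calc ∫⁻ x, g (e x) ∂ν = ∫⁻ x, g x ∂ν.map e :=
          (lintegral_map_equiv g e.toHomeomorph.toMeasurableEquiv).symm
      _ = c * ∫⁻ x, g x ∂μ := by rw [hc, lintegral_smul_measure, smul_eq_mul]
  exact
    { isLogConcave := hf.isLogConcave.comp_linearMap e.toLinearMap
      lowerSemicontinuous := hf.lowerSemicontinuous.comp e.continuous
      le_one := fun x => hf.le_one (e x)
      map_zero := by rw [_root_.map_zero, hf.map_zero]
      lintegral_ne_top := by
        rw [hmap]
        exact ENNReal.mul_ne_top ENNReal.coe_ne_top hf.lintegral_ne_top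
      lintegral_le_expWeight := fun l => by
        have hweight : ∀ x, f (e x) * expWeight l x =
            f (e x) * expWeight (l.comp (e.symm : V →L[ℝ] W)) (e x) := by simp [expWeight]
        simp_rw [hweight]
        rw [hmap, hmap fun y => f y * expWeight (l.comp (e.symm : V →L[ℝ] W)) y]
        exact mul_le_mul_right (hf.lintegral_le_expWeight _) _ }

/-! ### Geometric log-concave functions on Euclidean space -/

theorem ofReal_sSup_le {s : Set ℝ} {M : ℝ≥0∞} (h : ∀ t ∈ s, ENNReal.ofReal t ≤ M) :
    ENNReal.ofReal (sSup s) ≤ M := by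
  rcases eq_or_ne M ∞ with rfl | hM
  · exact le_top
  exact ENNReal.ofReal_le_of_le_toReal <| Real.sSup_le
    (fun t ht => (ENNReal.ofReal_le_iff_le_toReal hM).1 (h t ht)) ENNReal.toReal_nonneg

theorem setLIntegral_hausdorffMeasure {X : Type*} [EMetricSpace X] [MeasurableSpace X]
    [BorelSpace X] {s : Set X} (hs : MeasurableSet s) {d : ℝ} (hd : 0 ≤ d) (g : X → ℝ≥0∞) :
    ∫⁻ x in s, g x ∂μH[d] = ∫⁻ x : s, g x ∂μH[d] := by
  have hmap := (isometry_subtype_coe (s := s)).map_hausdorffMeasure (Or.inl hd)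
  rw [Subtype.range_coe] at hmap
  rw [← hmap, (MeasurableEmbedding.subtype_coe hs).lintegral_map]

/-- Addition `H × Hᗮ → E` as a continuous linear equivalence; it carries the projection to the
first factor to the orthogonal projection onto `H`. -/
def orthogonalSumEquiv {E : Type*} [NormedAddCommGroup E] [InnerProductSpace ℝ E]
    [FiniteDimensional ℝ E] (H : Submodule ℝ E) : (H × Hᗮ) ≃L[ℝ] E :=
  (H.prodEquivOfIsCompl Hᗮ H.isCompl_orthogonal).toContinuousLinearEquiv

theorem orthogonalSumEquiv_apply {E : Type*} [NormedAddCommGroup E] [InnerProductSpace ℝ E]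
    [FiniteDimensional ℝ E] (H : Submodule ℝ E) (p : H × Hᗮ) :
    orthogonalSumEquiv H p = p.1 + p.2 := by
  simp [orthogonalSumEquiv]

namespace IsGeomLogConcave

variable {n : ℕ} {f : EuclideanSpace ℝ (Fin n) → ℝ}

theorem map_zero_pos (hf : IsGeomLogConcave f) : 0 < f 0 := by
  by_contra! h₀
  have hzero : ∀ x, f x = 0 := fun x => ((hf.maxAtZero x).trans h₀).antisymm (hf.nonneg x)
  simpa [hzero] using hf.integral_pos

/-- The rescaling of `f` to a function with values in `[0, 1]` that takes the value `1` at `0`. -/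
def normalize (f : EuclideanSpace ℝ (Fin n) → ℝ) (x : EuclideanSpace ℝ (Fin n)) : ℝ≥0∞ :=
  ENNReal.ofReal (f x / f 0)

theorem normalize_le_one (hf : IsGeomLogConcave f) (x : EuclideanSpace ℝ (Fin n)) :
    normalize f x ≤ 1 :=
  ENNReal.ofReal_le_one.2 ((div_le_one hf.map_zero_pos).2 (hf.maxAtZero x))

theorem normalize_zero (hf : IsGeomLogConcave f) : normalize f 0 = 1 := by
  rw [normalize, div_self hf.map_zero_pos.ne', ENNReal.ofReal_one]

theorem isLogConcave_normalize (hf : IsGeomLogConcave f) : IsLogConcave (normalize f) := by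
  intro a b ha hb hab x y
  have hf₀ := hf.map_zero_pos
  have hx := hf.nonneg x
  have hy := hf.nonneg y
  simp only [normalize]
  rw [ENNReal.ofReal_rpow_of_nonneg (by positivity) ha.le,
    ENNReal.ofReal_rpow_of_nonneg (by positivity) hb.le, ← ENNReal.ofReal_mul (by positivity)]
  gcongr
  calc (f x / f 0) ^ a * (f y / f 0) ^ b = f x ^ a * f y ^ b / f 0 := by
        rw [Real.div_rpow hx hf₀.le, Real.div_rpow hy hf₀.le, div_mul_div_comm,
          ← Real.rpow_add hf₀, hab, Real.rpow_one]
    _ ≤ f (a • x + b • y) / f 0 := by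
        gcongr
        exact hf.logConcave x y a b ha.le hb.le hab

theorem lintegral_normalize (hf : IsGeomLogConcave f) :
    ∫⁻ x, normalize f x = ENNReal.ofReal ((∫ x, f x) / f 0) := by
  rw [← integral_div, ofReal_integral_eq_lintegral_ofReal (hf.integrable.div_const _)
    (.of_forall fun x => div_nonneg (hf.nonneg x) hf.map_zero_pos.le)]
  rfl

theorem integral_normalize_smul (hf : IsGeomLogConcave f) :
    ∫ x, (normalize f x).toReal • x = 0 := by
  have hsmul : ∀ x, (normalize f x).toReal • x = (f 0)⁻¹ • f x • x := fun x => by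
    rw [normalize, ENNReal.toReal_ofReal (div_nonneg (hf.nonneg x) hf.map_zero_pos.le), smul_smul,
      div_eq_inv_mul]
  simp_rw [hsmul]
  rw [integral_smul, hf.centered, smul_zero]

theorem isCenteredLogConcave (hf : IsGeomLogConcave f) :
    IsCenteredLogConcave volume (interiorRestrict (normalize f)) := by
  refine hf.isLogConcave_normalize.isCenteredLogConcave_interiorRestrict hf.normalize_le_one
    hf.normalize_zero ?_ ?_ hf.integral_normalize_smul
  · rw [hf.lintegral_normalize]
    exact (ENNReal.ofReal_pos.2 (div_pos hf.integral_pos hf.map_zero_pos)).ne'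
  · rw [hf.lintegral_normalize]
    exact ENNReal.ofReal_ne_top

theorem normalize_le_interiorRestrict (hf : IsGeomLogConcave f) (x : EuclideanSpace ℝ (Fin n)) :
    normalize f x ≤ interiorRestrict (normalize f) ((2⁻¹ : ℝ) • x) :=
  hf.isLogConcave_normalize.le_interiorRestrict_half_smul hf.normalize_le_one hf.normalize_zero
    (mem_of_indicator_ne_zero (hf.isCenteredLogConcave.map_zero.trans_ne one_ne_zero)) x

theorem ofReal_mul_normalize (hf : IsGeomLogConcave f) (x : EuclideanSpace ℝ (Fin n)) :
    ENNReal.ofReal (f 0) * normalize f x = ENNReal.ofReal (f x) := by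
  rw [normalize, ← ENNReal.ofReal_mul hf.map_zero_pos.le, mul_div_cancel₀ _ hf.map_zero_pos.ne']

theorem ofReal_sqrt_mul (hf : IsGeomLogConcave f) (x y : EuclideanSpace ℝ (Fin n)) :
    ENNReal.ofReal √(f x * f y) =
      ENNReal.ofReal (f 0) * (normalize f x ^ (2⁻¹ : ℝ) * normalize f y ^ (2⁻¹ : ℝ)) := by
  have hsq : ENNReal.ofReal (f 0) =
      ENNReal.ofReal (f 0) ^ (2⁻¹ : ℝ) * ENNReal.ofReal (f 0) ^ (2⁻¹ : ℝ) := by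
    rw [← ENNReal.rpow_add_of_nonneg _ _ (by norm_num) (by norm_num)]
    norm_num
  rw [hsq, mul_mul_mul_comm, ← ENNReal.mul_rpow_of_nonneg _ _ (by norm_num),
    ← ENNReal.mul_rpow_of_nonneg _ _ (by norm_num), hf.ofReal_mul_normalize,
    hf.ofReal_mul_normalize, ← ENNReal.mul_rpow_of_nonneg _ _ (by norm_num),
    ← ENNReal.ofReal_mul (hf.nonneg x),
    ENNReal.ofReal_rpow_of_nonneg (mul_nonneg (hf.nonneg x) (hf.nonneg y)) (by norm_num),
    Real.sqrt_eq_rpow, one_div]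

theorem ofReal_funProj_deltaOut_le (hf : IsGeomLogConcave f)
    (H : Submodule ℝ (EuclideanSpace ℝ (Fin n))) {g : H × Hᗮ → ℝ≥0∞}
    (hg : ∀ p, g p = interiorRestrict (normalize f) (orthogonalSumEquiv H p)) (z : H) :
    ENNReal.ofReal (funProj H (deltaOut f) z) ≤ ENNReal.ofReal (f 0) *
      ⨆ b, projFst g (b + z) ^ (2⁻¹ : ℝ) * projFst g b ^ (2⁻¹ : ℝ) := by
  have hle : ∀ x p, orthogonalSumEquiv H p = (2⁻¹ : ℝ) • x → normalize f x ≤ projFst g p.1 :=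
    fun x p hp => (hf.normalize_le_interiorRestrict x).trans <| by
      rw [← hp, ← hg]
      exact le_iSup (fun w => g (p.1, w)) p.2
  refine ofReal_sSup_le ?_
  rintro _ ⟨y, hy, rfl⟩
  refine ofReal_sSup_le ?_
  rintro _ ⟨x₁, x₂, hx, rfl⟩
  obtain ⟨q, hq⟩ := (orthogonalSumEquiv H).surjective ((2⁻¹ : ℝ) • -x₂)
  have hq_add : orthogonalSumEquiv H (q + (z, ⟨y, hy⟩)) = (2⁻¹ : ℝ) • x₁ := by
    rw [map_add, hq, orthogonalSumEquiv_apply, add_comm (z : EuclideanSpace ℝ (Fin n)), hx]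
    module
  rw [hf.ofReal_sqrt_mul]
  refine mul_le_mul_right (le_iSup_of_le q.1 ?_) _
  gcongr
  · exact hle x₁ _ hq_add
  · exact hle (-x₂) q hq

theorem le_ofReal_funProj_deltaIn (hf : IsGeomLogConcave f)
    (H : Submodule ℝ (EuclideanSpace ℝ (Fin n))) {g : H × Hᗮ → ℝ≥0∞}
    (hg : ∀ p, g p = interiorRestrict (normalize f) (orthogonalSumEquiv H p)) (z : H) :
    ENNReal.ofReal (f 0) * symmProj g (0, z) ≤ ENNReal.ofReal (funProj H (deltaIn f) z) := by
  have hg_le : ∀ p, ENNReal.ofReal (f 0) * g p ≤ ENNReal.ofReal (f (orthogonalSumEquiv H p)) :=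
    fun p => by
      rw [← hf.ofReal_mul_normalize (orthogonalSumEquiv H p), hg]
      exact mul_le_mul_right (interiorRestrict_le (normalize f) _) _
  rw [symmProj, ENNReal.mul_iSup]
  refine iSup_le fun w => ?_
  calc ENNReal.ofReal (f 0) * min (g (0 + (z, w))) (g (0 - (z, w)))
      ≤ ENNReal.ofReal (deltaIn f (orthogonalSumEquiv H (z, w))) := by
        rw [zero_add, zero_sub, deltaIn, ENNReal.ofReal_min, mul_min, ← map_neg]
        exact min_le_min (hg_le _) (hg_le _)
    _ ≤ ENNReal.ofReal (funProj H (deltaIn f) z) := by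
        refine ENNReal.ofReal_le_ofReal (le_csSup ⟨f 0, ?_⟩ ⟨w, w.2, ?_⟩)
        · rintro _ ⟨y, -, rfl⟩
          exact (min_le_left _ _).trans (hf.maxAtZero _)
        · rw [orthogonalSumEquiv_apply, add_comm]

theorem lintegral_funProj_deltaOut_le (hf : IsGeomLogConcave f)
    {H : Submodule ℝ (EuclideanSpace ℝ (Fin n))} (hH : 0 < finrank ℝ H) (μ : Measure H)
    [μ.IsAddHaarMeasure] :
    ∫⁻ z : H, ENNReal.ofReal (funProj H (deltaOut f) z) ∂μ ≤
      ENNReal.ofReal ((256 * (n / finrank ℝ H : ℝ) ^ 2) ^ finrank ℝ H) *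
        ∫⁻ z : H, ENNReal.ofReal (funProj H (deltaIn f) z) ∂μ := by
  set g := fun p => interiorRestrict (normalize f) (orthogonalSumEquiv H p)
  have hg := hf.isCenteredLogConcave.comp_continuousLinearEquiv
    (μ.prod (volume : Measure Hᗮ)) (orthogonalSumEquiv H)
  have hdim : finrank ℝ H + finrank ℝ Hᗮ = n := by simp [H.finrank_add_finrank_orthogonal]
  have hcore := hg.lintegral_iSup_projFst_le hH
  rw [hdim] at hcore
  calc ∫⁻ z : H, ENNReal.ofReal (funProj H (deltaOut f) z) ∂μ
      ≤ ∫⁻ z, ENNReal.ofReal (f 0) *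
          (⨆ b, projFst g (b + z) ^ (2⁻¹ : ℝ) * projFst g b ^ (2⁻¹ : ℝ)) ∂μ :=
        lintegral_mono (hf.ofReal_funProj_deltaOut_le H fun _ => rfl)
    _ = ENNReal.ofReal (f 0) *
          ∫⁻ z, (⨆ b, projFst g (b + z) ^ (2⁻¹ : ℝ) * projFst g b ^ (2⁻¹ : ℝ)) ∂μ :=
        lintegral_const_mul' _ _ ENNReal.ofReal_ne_top
    _ ≤ ENNReal.ofReal (f 0) * (_ * ∫⁻ z, symmProj g (0, z) ∂μ) := mul_le_mul_right hcore _
    _ = _ * ∫⁻ z, ENNReal.ofReal (f 0) * symmProj g (0, z) ∂μ := by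
        rw [lintegral_const_mul' _ _ ENNReal.ofReal_ne_top, mul_left_comm]
    _ ≤ _ := mul_le_mul_right (lintegral_mono (hf.le_ofReal_funProj_deltaIn H fun _ => rfl)) _

end IsGeomLogConcave

theorem stmt7_general {n : ℕ} {f : EuclideanSpace ℝ (Fin n) → ℝ} (hf : IsGeomLogConcave f)
    {k : ℕ} (hk : 1 ≤ k) {H : Submodule ℝ (EuclideanSpace ℝ (Fin n))} (hH : finrank ℝ H = k) :
    (∫⁻ x in (H : Set (EuclideanSpace ℝ (Fin n))),
        ENNReal.ofReal (funProj H (deltaOut f) x) ∂μH[(k : ℝ)]) ^ ((k : ℝ)⁻¹) ≤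
      ENNReal.ofReal (256 * ((n : ℝ) / k) ^ 2) *
        (∫⁻ x in (H : Set (EuclideanSpace ℝ (Fin n))),
          ENNReal.ofReal (funProj H (deltaIn f) x) ∂μH[(k : ℝ)]) ^ ((k : ℝ)⁻¹) := by
  subst hH
  have hmeas : MeasurableSet (H : Set (EuclideanSpace ℝ (Fin n))) :=
    H.closed_of_finiteDimensional.measurableSet
  have : (μH[finrank ℝ H] : Measure H).IsAddHaarMeasure := isAddHaarMeasure_hausdorffMeasure
  rw [setLIntegral_hausdorffMeasure hmeas (by positivity),
    setLIntegral_hausdorffMeasure hmeas (by positivity)]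
  refine (ENNReal.rpow_le_rpow (hf.lintegral_funProj_deltaOut_le hk μH[finrank ℝ H])
    (by positivity)).trans_eq ?_
  rw [ENNReal.mul_rpow_of_nonneg _ _ (by positivity),
    ENNReal.ofReal_rpow_of_nonneg (by positivity) (by positivity),
    Real.pow_rpow_inv_natCast (by positivity) (by omega)]
  rfl

/-- Theorem (functional projections inequality):
`(∫_H P_H(Δ_out f))^{1/k} ≤ C·(n/k)²·(log n)³ · (∫_H P_H(Δ_in f))^{1/k}`
for geometric log-concave `f`. -/
theorem stmt7 :
    ∃ C : ℝ, 0 < C ∧ ∀ (n : ℕ), 2 ≤ n →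
      ∀ f : EuclideanSpace ℝ (Fin n) → ℝ, IsGeomLogConcave f →
        ∀ k : ℕ, 1 ≤ k → k ≤ n - 1 →
          ∀ H : Submodule ℝ (EuclideanSpace ℝ (Fin n)), Module.finrank ℝ H = k →
            (∫⁻ x in (H : Set (EuclideanSpace ℝ (Fin n))),
                ENNReal.ofReal (funProj H (deltaOut f) x) ∂μH[(k : ℝ)]) ^ ((k : ℝ)⁻¹) ≤
              ENNReal.ofReal (C * ((n : ℝ) / k) ^ 2 * (Real.log n) ^ 3) *
                (∫⁻ x in (H : Set (EuclideanSpace ℝ (Fin n))),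
                  ENNReal.ofReal (funProj H (deltaIn f) x) ∂μH[(k : ℝ)]) ^ ((k : ℝ)⁻¹) := by
  have : 0 < Real.log 2 := Real.log_pos one_lt_two
  refine ⟨256 / Real.log 2 ^ 3, by positivity, fun n hn f hf k hk _ H hH => ?_⟩
  refine (stmt7_general hf hk hH).trans (mul_le_mul_left (ENNReal.ofReal_le_ofReal ?_) _)
  have hlog : Real.log 2 ≤ Real.log n := Real.log_le_log two_pos (by exact_mod_cast hn)
  calc 256 * ((n : ℝ) / k) ^ 2 = 256 / Real.log 2 ^ 3 * ((n : ℝ) / k) ^ 2 * Real.log 2 ^ 3 := by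
        field_simp
    _ ≤ 256 / Real.log 2 ^ 3 * ((n : ℝ) / k) ^ 2 * Real.log n ^ 3 := by gcongr
end
end

section
/- Let K be a convex body in ℝ^n with 0 in its interior, let A > 0, and suppose that N(B₂ⁿ, t·K) ≤ exp(A·n/t²) for every t > 0, where N denotes the covering number. Then for every 1 ≤ k ≤ n−1 and every k-dimensional linear subspace H of ℝ^n, vol_k(B_H) ≤ e^k · A^{k/2} · (n/k)^{k/2} · vol_k(P_H(K)); equivalently 1 ≤ e·√A·√(n/k) · vrad(P_H(K)). -/
open MeasureTheory Metric Set
open scoped ENNReal RealInnerProductSpace Pointwise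

noncomputable section

/-- The covering number `N(A, B)`: the least number of translates of `B` needed to cover `A`. -/
def covN {n : ℕ} (A B : Set (EuclideanSpace ℝ (Fin n))) : ℕ∞ :=
  sInf ((fun s : Finset (EuclideanSpace ℝ (Fin n)) => (s.card : ℕ∞)) ''
    {s | A ⊆ ⋃ x ∈ s, (fun b => x + b) '' B})

/-- The orthogonal projection of a set onto a subspace, viewed inside the ambient space. -/
def projSet {n : ℕ} (H : Submodule ℝ (EuclideanSpace ℝ (Fin n)))
    (A : Set (EuclideanSpace ℝ (Fin n))) : Set (EuclideanSpace ℝ (Fin n)) :=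
  (fun x => (Submodule.orthogonalProjectionOnto H x : EuclideanSpace ℝ (Fin n))) '' A

/-- The volume radius of a subset of a `k`-dimensional subspace `H`: the `k`-th root of the
ratio of its `k`-dimensional (Hausdorff) volume to that of the unit ball of `H`. -/
def vrad {n : ℕ} (k : ℕ) (H : Submodule ℝ (EuclideanSpace ℝ (Fin n)))
    (A : Set (EuclideanSpace ℝ (Fin n))) : ℝ≥0∞ :=
  (μH[(k : ℝ)] A / μH[(k : ℝ)] (closedBall (0 : EuclideanSpace ℝ (Fin n)) 1 ∩ (H : Set _)))
    ^ ((k : ℝ)⁻¹)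

/-!
If `N` translates of `t • K` cover the unit ball, then their projections cover `B_H`, so
`vol_k(B_H) ≤ N * t ^ k * vol_k(P_H K)`. The choice `t = √A * √(n / k)` turns the assumed bound
`N ≤ exp (A * n / t ^ 2)` into `N ≤ exp k`.
-/

section Covering

variable {m n : ℕ} {A B : Set (EuclideanSpace ℝ (Fin n))}

theorem exists_finset_card_eq_covN (h : covN A B ≠ ⊤) :
    ∃ s : Finset (EuclideanSpace ℝ (Fin n)),
      A ⊆ ⋃ x ∈ s, (fun b => x + b) '' B ∧ (s.card : ℕ∞) = covN A B := by
  have hne : ((fun s : Finset (EuclideanSpace ℝ (Fin n)) => (s.card : ℕ∞)) ''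
      {s | A ⊆ ⋃ x ∈ s, (fun b => x + b) '' B}).Nonempty := by
    refine nonempty_iff_ne_empty.2 fun hempty => h ?_
    rw [covN, hempty, sInf_empty]
  exact csInf_mem hne

theorem covN_le_card {s : Finset (EuclideanSpace ℝ (Fin n))}
    (hs : A ⊆ ⋃ x ∈ s, (fun b => x + b) '' B) : covN A B ≤ s.card :=
  sInf_le ⟨s, hs, rfl⟩

theorem covN_mono_left {A' : Set (EuclideanSpace ℝ (Fin n))} (h : A ⊆ A') :
    covN A B ≤ covN A' B :=
  sInf_le_sInf <| image_mono fun _ hs => h.trans hs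

theorem covN_image_le {F : Type*}
    [FunLike F (EuclideanSpace ℝ (Fin n)) (EuclideanSpace ℝ (Fin m))]
    [AddHomClass F (EuclideanSpace ℝ (Fin n)) (EuclideanSpace ℝ (Fin m))] (f : F) :
    covN (f '' A) (f '' B) ≤ covN A B := by
  classical
  by_cases htop : covN A B = ⊤
  · exact htop ▸ le_top
  obtain ⟨s, hs, hcard⟩ := exists_finset_card_eq_covN htop
  have hcover : f '' A ⊆ ⋃ y ∈ s.image f, (fun b => y + b) '' (f '' B) := by
    rintro _ ⟨a, ha, rfl⟩
    obtain ⟨x, hx, b, hb, rfl⟩ := mem_iUnion₂.1 (hs ha)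
    exact mem_iUnion₂.2 ⟨f x, Finset.mem_image_of_mem f hx, f b, ⟨b, hb, rfl⟩, (map_add f x b).symm⟩
  calc covN (f '' A) (f '' B) ≤ (s.image f).card := covN_le_card hcover
    _ ≤ s.card := by exact_mod_cast Finset.card_image_le
    _ = covN A B := hcard

theorem measure_le_covN_mul (μ : Measure (EuclideanSpace ℝ (Fin n))) [μ.IsAddLeftInvariant]
    (h : covN A B ≠ ⊤) : μ A ≤ covN A B * μ B := by
  obtain ⟨s, hs, hcard⟩ := exists_finset_card_eq_covN h
  calc μ A ≤ μ (⋃ x ∈ s, (fun b => x + b) '' B) := measure_mono hs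
    _ ≤ ∑ x ∈ s, μ ((fun b => x + b) '' B) := measure_biUnion_finset_le s _
    _ = ∑ _x ∈ s, μ B := Finset.sum_congr rfl fun x _ => measure_vadd μ x B
    _ = covN A B * μ B := by
      rw [Finset.sum_const, nsmul_eq_mul, ← hcard, ENat.toENNReal_coe]

end Covering

section Projection

variable {n : ℕ} (H : Submodule ℝ (EuclideanSpace ℝ (Fin n)))
  (A B : Set (EuclideanSpace ℝ (Fin n)))

theorem projSet_eq_image_starProjection : projSet H A = H.starProjection '' A :=
  rfl

theorem inter_subset_projSet : A ∩ H ⊆ projSet H A :=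
  fun x hx => ⟨x, hx.1, Submodule.starProjection_eq_self_iff.2 hx.2⟩

theorem projSet_smul (t : ℝ) : projSet H (t • A) = t • projSet H A := by
  simp only [projSet_eq_image_starProjection, image_smul_set]

theorem covN_inter_projSet_le : covN (A ∩ H) (projSet H B) ≤ covN A B :=
  calc covN (A ∩ H) (projSet H B)
    _ ≤ covN (projSet H A) (projSet H B) := covN_mono_left (inter_subset_projSet H A)
    _ ≤ covN A B := covN_image_le H.starProjection

end Projection

theorem hausdorffMeasure_smul_of_pos {E : Type*} [NormedAddCommGroup E] [NormedSpace ℝ E]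
    [MeasurableSpace E] [BorelSpace E] {d t : ℝ} (hd : 0 ≤ d) (ht : 0 < t) (S : Set E) :
    μH[d] (t • S) = ENNReal.ofReal t ^ d * μH[d] S := by
  rw [Measure.hausdorffMeasure_smul₀ hd ht.ne', ENNReal.smul_def, smul_eq_mul,
    ENNReal.coe_rpow_of_nonneg _ hd, ← Real.enorm_of_nonneg ht.le, enorm_eq_nnnorm]

theorem hausdorffMeasure_inter_le_covN_mul {n : ℕ} {A K : Set (EuclideanSpace ℝ (Fin n))}
    {d t : ℝ} (hd : 0 ≤ d) (ht : 0 < t) (hcov : covN A (t • K) ≠ ⊤)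
    (H : Submodule ℝ (EuclideanSpace ℝ (Fin n))) :
    μH[d] (A ∩ H) ≤ covN A (t • K) * (ENNReal.ofReal t ^ d * μH[d] (projSet H K)) := by
  have hle := covN_inter_projSet_le H A (t • K)
  calc μH[d] (A ∩ H)
    _ ≤ covN (A ∩ H) (projSet H (t • K)) * μH[d] (projSet H (t • K)) :=
      measure_le_covN_mul _ (ne_top_of_le_ne_top hcov hle)
    _ ≤ covN A (t • K) * μH[d] (projSet H (t • K)) := by gcongr
    _ = covN A (t • K) * (ENNReal.ofReal t ^ d * μH[d] (projSet H K)) := by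
      rw [projSet_smul, hausdorffMeasure_smul_of_pos hd ht]

section UnitBall

variable {E : Type*} [NormedAddCommGroup E] [NormedSpace ℝ E] [MeasurableSpace E] [BorelSpace E]
  (H : Submodule ℝ E)

theorem hausdorffMeasure_closedBall_inter {d : ℝ} (hd : 0 ≤ d) (r : ℝ) :
    μH[d] (closedBall (0 : E) r ∩ H) = μH[d] (closedBall (0 : H) r) := by
  have himage : closedBall (0 : E) r ∩ H = Subtype.val '' closedBall (0 : H) r :=
    (inter_comm _ _).trans (Subtype.image_preimage_coe (H : Set E) (closedBall 0 r)).symm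
  rw [himage, isometry_subtype_coe.hausdorffMeasure_image (Or.inl hd)]

variable [FiniteDimensional ℝ H] {r : ℝ}

theorem hausdorffMeasure_closedBall_inter_ne_zero (hr : 0 < r) :
    μH[Module.finrank ℝ H] (closedBall (0 : E) r ∩ H) ≠ 0 := by
  rw [hausdorffMeasure_closedBall_inter H (Nat.cast_nonneg _)]
  exact (measure_closedBall_pos _ _ hr).ne'

theorem hausdorffMeasure_closedBall_inter_ne_top :
    μH[Module.finrank ℝ H] (closedBall (0 : E) r ∩ H) ≠ ⊤ := by
  rw [hausdorffMeasure_closedBall_inter H (Nat.cast_nonneg _)]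
  exact (isCompact_closedBall _ _).measure_ne_top

end UnitBall

theorem one_le_mul_vrad_iff {n k : ℕ} (hk : k ≠ 0) {H : Submodule ℝ (EuclideanSpace ℝ (Fin n))}
    (hH : Module.finrank ℝ H = k) {S : Set (EuclideanSpace ℝ (Fin n))} {c : ℝ≥0∞} :
    1 ≤ c * vrad k H S ↔
      μH[(k : ℝ)] (closedBall (0 : EuclideanSpace ℝ (Fin n)) 1 ∩ (H : Set _)) ≤
        c ^ k * μH[(k : ℝ)] S := by
  subst hH
  have hpos : 0 < (Module.finrank ℝ H : ℝ) := by positivity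
  rw [vrad, ← ENNReal.rpow_rpow_inv hpos.ne' c,
    ← ENNReal.mul_rpow_of_nonneg _ _ (inv_nonneg.2 hpos.le), ENNReal.le_rpow_inv_iff hpos,
    ENNReal.one_rpow, ← mul_div_assoc, ENNReal.le_div_iff_mul_le
      (Or.inl (hausdorffMeasure_closedBall_inter_ne_zero H one_pos))
      (Or.inl (hausdorffMeasure_closedBall_inter_ne_top H)),
    one_mul, ENNReal.rpow_rpow_inv hpos.ne', ENNReal.rpow_natCast]

theorem mul_sqrt_mul_sqrt_pow {a b : ℝ} (ha : 0 ≤ a) (hb : 0 ≤ b) (c : ℝ) (k : ℕ) :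
    (c * √a * √b) ^ k = c ^ k * a ^ ((k : ℝ) / 2) * b ^ ((k : ℝ) / 2) := by
  simp only [mul_pow, Real.rpow_div_two_eq_sqrt _ ha, Real.rpow_div_two_eq_sqrt _ hb,
    Real.rpow_natCast]

theorem hausdorffMeasure_closedBall_inter_le_of_covN_le {n k : ℕ}
    {K : Set (EuclideanSpace ℝ (Fin n))} {t : ℝ} (ht : 0 < t)
    (hcov : (covN (closedBall (0 : EuclideanSpace ℝ (Fin n)) 1) (t • K) : ℝ≥0∞) ≤
      ENNReal.ofReal (Real.exp k)) (H : Submodule ℝ (EuclideanSpace ℝ (Fin n))) :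
    μH[(k : ℝ)] (closedBall (0 : EuclideanSpace ℝ (Fin n)) 1 ∩ (H : Set _)) ≤
      ENNReal.ofReal (Real.exp 1 * t) ^ k * μH[(k : ℝ)] (projSet H K) := by
  have hfin := ENat.toENNReal_ne_top.1 (ne_top_of_le_ne_top ENNReal.ofReal_ne_top hcov)
  calc μH[(k : ℝ)] (closedBall (0 : EuclideanSpace ℝ (Fin n)) 1 ∩ (H : Set _))
    _ ≤ covN (closedBall (0 : EuclideanSpace ℝ (Fin n)) 1) (t • K) *
          (ENNReal.ofReal t ^ (k : ℝ) * μH[(k : ℝ)] (projSet H K)) :=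
      hausdorffMeasure_inter_le_covN_mul (Nat.cast_nonneg k) ht hfin H
    _ ≤ ENNReal.ofReal (Real.exp k) *
          (ENNReal.ofReal t ^ (k : ℝ) * μH[(k : ℝ)] (projSet H K)) := by gcongr
    _ = ENNReal.ofReal (Real.exp 1 * t) ^ k * μH[(k : ℝ)] (projSet H K) := by
      rw [← Real.exp_one_pow, ENNReal.ofReal_pow (Real.exp_pos 1).le, ENNReal.rpow_natCast,
        ENNReal.ofReal_mul (Real.exp_pos 1).le, mul_pow, mul_assoc]

theorem stmt13_general {n : ℕ} {K : Set (EuclideanSpace ℝ (Fin n))} {A : ℝ} (hA : 0 < A)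
    (hcov : ∀ t : ℝ, 0 < t →
      (covN (closedBall (0 : EuclideanSpace ℝ (Fin n)) 1) (t • K) : ℝ≥0∞) ≤
        ENNReal.ofReal (Real.exp (A * n / t ^ 2)))
    {k : ℕ} (hk : 1 ≤ k) {H : Submodule ℝ (EuclideanSpace ℝ (Fin n))}
    (hH : Module.finrank ℝ H = k) :
    μH[(k : ℝ)] (closedBall (0 : EuclideanSpace ℝ (Fin n)) 1 ∩ (H : Set _)) ≤
        ENNReal.ofReal (Real.exp 1 ^ k * A ^ ((k : ℝ) / 2) * ((n : ℝ) / k) ^ ((k : ℝ) / 2)) *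
          μH[(k : ℝ)] (projSet H K) ∧
      1 ≤ ENNReal.ofReal (Real.exp 1 * √A * √((n : ℝ) / k)) *
          vrad k H (projSet H K) := by
  have hkn : k ≤ n := by simpa [hH] using H.finrank_le
  have hn : 0 < n := hk.trans hkn
  have hscale : A * n / (√A * √(n / k)) ^ 2 = k := by
    rw [mul_pow, Real.sq_sqrt hA.le, Real.sq_sqrt (by positivity)]
    field_simp
  have hvol : μH[(k : ℝ)] (closedBall (0 : EuclideanSpace ℝ (Fin n)) 1 ∩ (H : Set _)) ≤
      ENNReal.ofReal (Real.exp 1 * √A * √(n / k)) ^ k * μH[(k : ℝ)] (projSet H K) := by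
    have hcovk := hcov (√A * √(n / k)) (by positivity)
    rw [hscale] at hcovk
    rw [mul_assoc (Real.exp 1)]
    exact hausdorffMeasure_closedBall_inter_le_of_covN_le (by positivity) hcovk H
  refine ⟨?_, (one_le_mul_vrad_iff (by positivity) hH).2 hvol⟩
  rwa [← mul_sqrt_mul_sqrt_pow hA.le (by positivity), ENNReal.ofReal_pow (by positivity)]

/-- Dual Sudakov-type covering hypothesis implies a lower volume bound for projections:
`vol_k(B_H) ≤ e^k·A^{k/2}·(n/k)^{k/2}·vol_k(P_H(K))`, equivalently
`1 ≤ e·√A·√(n/k)·vrad(P_H(K))`. -/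
theorem stmt13 (n : ℕ) (K : Set (EuclideanSpace ℝ (Fin n)))
    (hK : IsCompact K) (hKc : Convex ℝ K) (h0 : (0 : EuclideanSpace ℝ (Fin n)) ∈ interior K)
    (A : ℝ) (hA : 0 < A)
    (hcov : ∀ t : ℝ, 0 < t →
      (covN (closedBall (0 : EuclideanSpace ℝ (Fin n)) 1) (t • K) : ℝ≥0∞) ≤
        ENNReal.ofReal (Real.exp (A * n / t ^ 2))) :
    ∀ k : ℕ, 1 ≤ k → k ≤ n - 1 →
      ∀ H : Submodule ℝ (EuclideanSpace ℝ (Fin n)), Module.finrank ℝ H = k →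
        μH[(k : ℝ)] (closedBall (0 : EuclideanSpace ℝ (Fin n)) 1 ∩ (H : Set _)) ≤
            ENNReal.ofReal (Real.exp 1 ^ k * A ^ ((k : ℝ) / 2) * ((n : ℝ) / k) ^ ((k : ℝ) / 2)) *
              μH[(k : ℝ)] (projSet H K) ∧
          1 ≤ ENNReal.ofReal (Real.exp 1 * Real.sqrt A * Real.sqrt ((n : ℝ) / k)) *
              vrad k H (projSet H K) := by
  exact fun _ hk _ _ hH => stmt13_general hA hcov hk hH
end
end
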